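/- arXiv:1409.7423 — 4 statements merged into one kernel-verified Lean document; each statement's English description precedes it below -/
import Mathlib

section
/- Cartesian Rellich lemma (the paper's Lemma 2): Let E ∈ ℝ and let Ω ⊂ ℝ² be a bounded set such that ℝ² ∖ closure(Ω) is connected. Suppose u : ℝ² → ℂ is twice continuously differentiable on ℝ² ∖ closure(Ω) and satisfies the gravity Helmholtz equation ∂²u/∂x₁² + ∂²u/∂x₂² + (E + x₂)·u = 0 there, and suppose lim_{x₂→+∞} √(E + x₂) · ∫_ℝ |u(x₁,x₂)|² dx₁ = 0 (in particular, ∫_ℝ |u(x₁,x₂)|² dx₁ is finite for all sufficiently large x₂). Then u = 0 everywhere on ℝ² ∖ closure(Ω). -/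
open MeasureTheory Filter Topology

noncomputable def pd1 (u : ℝ × ℝ → ℂ) (p : ℝ × ℝ) : ℂ :=
  deriv (fun t : ℝ => u (t, p.2)) p.1

noncomputable def pd2 (u : ℝ × ℝ → ℂ) (p : ℝ × ℝ) : ℂ :=
  deriv (fun t : ℝ => u (p.1, t)) p.2

noncomputable def pd11 (u : ℝ × ℝ → ℂ) (p : ℝ × ℝ) : ℂ :=
  deriv (fun t : ℝ => pd1 u (t, p.2)) p.1

noncomputable def pd22 (u : ℝ × ℝ → ℂ) (p : ℝ × ℝ) : ℂ :=
  deriv (fun t : ℝ => pd2 u (p.1, t)) p.2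

/-- The gravity Helmholtz equation `Δu + (E + x₂) u = 0` holds at the point `p`. -/
def GravityHelmholtzAt (E : ℝ) (u : ℝ × ℝ → ℂ) (p : ℝ × ℝ) : Prop :=
  pd11 u p + pd22 u p + ((E + p.2 : ℝ) : ℂ) * u p = 0

open scoped FourierTransform

/-
Where `u` is defined on a half-plane, its partial Fourier transform in `x₁` at frequency `k` solves
the Airy equation `v'' + (E + x₂ - (2πk)²) v = 0` in `x₂`. Pairing it with an Airy solution `Y`
gives a Wronskian that is constant in `x₂`, whereas `Y² + Y'²` grows no faster than `√x₂`; the decay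
of `√(E + x₂) ∫ |u|² dx₁` then forces the Wronskian, and hence `u`, to vanish on the half-plane.
A Carleman estimate with the weights `|z - q|⁻²ⁿ`, obtained by factoring the Laplacian into
`∂₁ - i∂₂` and `∂₁ + i∂₂`, propagates the zero to every connected open set containing it.
-/

section ConfluentLimit

open Complex

theorem hasFPowerSeriesOnBall_regularizedHGFun_singleton (c : ℂ) :
    HasFPowerSeriesOnBall (regularizedHGFun 0 {c}) (regularizedHGFunSeries 0 {c}) 0 ⊤ := by
  have hr : (regularizedHGFunSeries 0 {c}).radius = ⊤ :=
    radius_regularizedHGFunSeries_eq_top (by simp)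
  exact hr ▸ (regularizedHGFunSeries 0 {c}).hasFPowerSeriesOnBall (by simp [hr])

theorem hasSum_regularizedHGFun_singleton (c z : ℂ) :
    HasSum (fun n : ℕ ↦ 1 / (n.factorial * Gamma (c + n)) * z ^ n) (regularizedHGFun 0 {c} z) := by
  simpa [FormalMultilinearSeries.apply_eq_pow_smul_coeff, regularizedHGFunCoeff, mul_comm] using
    (hasFPowerSeriesOnBall_regularizedHGFun_singleton c).hasSum (y := z) (by simp)

theorem hasSum_deriv_regularizedHGFun_singleton (c z : ℂ) :
    HasSum (fun n : ℕ ↦ (n + 1) * (1 / ((n + 1).factorial * Gamma (c + (n + 1 : ℕ)))) * z ^ n)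
      (deriv (regularizedHGFun 0 {c}) z) := by
  have h := (hasFPowerSeriesOnBall_regularizedHGFun_singleton c).fderiv.hasSum (y := z) (by simp)
  simpa [FormalMultilinearSeries.apply_eq_pow_smul_coeff, regularizedHGFunCoeff, mul_comm] using
    h.mapL (ContinuousLinearMap.apply ℂ ℂ (1 : ℂ))

theorem hasDerivAt_regularizedHGFun_singleton (c z : ℂ) :
    HasDerivAt (regularizedHGFun 0 {c}) (regularizedHGFun 0 {c + 1} z) z := by
  have hdiff : DifferentiableAt ℂ (regularizedHGFun 0 {c}) z :=
    ((hasFPowerSeriesOnBall_regularizedHGFun_singleton c).analyticAt_of_mem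
      (by simp)).differentiableAt
  refine hdiff.hasDerivAt.congr_deriv <| (hasSum_deriv_regularizedHGFun_singleton c z).unique ?_
  convert! hasSum_regularizedHGFun_singleton (c + 1) z using 3 with n
  rw [Nat.factorial_succ, mul_one_div, show c + (n + 1 : ℕ) = c + 1 + n by push_cast; ring]
  push_cast
  rw [mul_assoc, div_mul_cancel_left₀ (Nat.cast_add_one_ne_zero n), one_div]

theorem regularizedHGFun_singleton_contiguous (c z : ℂ) :
    regularizedHGFun 0 {c} z =
      c * regularizedHGFun 0 {c + 1} z + z * regularizedHGFun 0 {c + 2} z := by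
  have hderiv := hasSum_deriv_regularizedHGFun_singleton (c + 1) z
  rw [(hasDerivAt_regularizedHGFun_singleton (c + 1) z).deriv, add_assoc, one_add_one_eq_two]
    at hderiv
  have hshift : HasSum (fun n : ℕ ↦ n * (1 / (n.factorial * Gamma (c + 1 + n))) * z ^ n)
      (z * regularizedHGFun 0 {c + 2} z) := by
    rw [← hasSum_nat_add_iff' 1]
    convert! hderiv.mul_left z using 1
    · ext n
      push_cast
      ring
    · simp
  refine (hasSum_regularizedHGFun_singleton c z).unique ?_
  convert! ((hasSum_regularizedHGFun_singleton (c + 1) z).mul_left c).add hshift using 2 with n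
  have h := one_div_Gamma_eq_self_mul_one_div_Gamma_add_one (c + n)
  rw [add_right_comm] at h
  simp only [one_div, mul_inv, h]
  ring

end ConfluentLimit

section AiryEquation

/-- `Y` solves the reflected Airy equation `Y'' = -s Y` on the whole line, with derivative `Z`. -/
structure IsAirySolution (Y Z : ℝ → ℝ) : Prop where
  hasDerivAt_fst (s : ℝ) : HasDerivAt Y (Z s) s
  hasDerivAt_snd (s : ℝ) : HasDerivAt Z (-s * Y s) s

theorem IsAirySolution.of_complex {Y Z : ℂ → ℂ} (hY : ∀ s, HasDerivAt Y (Z s) s)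
    (hZ : ∀ s, HasDerivAt Z (-s * Y s) s) :
    IsAirySolution (fun s ↦ (Y s).re) (fun s ↦ (Z s).re) where
  hasDerivAt_fst s := (hY s).real_of_complex
  hasDerivAt_snd s := by simpa using (hZ s).real_of_complex

namespace IsAirySolution

variable {Y Z Y₁ Z₁ Y₂ Z₂ : ℝ → ℝ}

theorem linearCombination (h₁ : IsAirySolution Y₁ Z₁) (h₂ : IsAirySolution Y₂ Z₂) (a b : ℝ) :
    IsAirySolution (fun s ↦ a * Y₁ s + b * Y₂ s) (fun s ↦ a * Z₁ s + b * Z₂ s) where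
  hasDerivAt_fst s := ((h₁.hasDerivAt_fst s).const_mul a).add ((h₂.hasDerivAt_fst s).const_mul b)
  hasDerivAt_snd s := by
    refine (((h₁.hasDerivAt_snd s).const_mul a).add
      ((h₂.hasDerivAt_snd s).const_mul b)).congr_deriv ?_
    ring

theorem wronskian_eq (h₁ : IsAirySolution Y₁ Z₁) (h₂ : IsAirySolution Y₂ Z₂) (s t : ℝ) :
    Y₁ s * Z₂ s - Y₂ s * Z₁ s = Y₁ t * Z₂ t - Y₂ t * Z₁ t := by
  have hderiv (s : ℝ) : HasDerivAt (fun s ↦ Y₁ s * Z₂ s - Y₂ s * Z₁ s) 0 s := by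
    refine (((h₁.hasDerivAt_fst s).mul (h₂.hasDerivAt_snd s)).sub
      ((h₂.hasDerivAt_fst s).mul (h₁.hasDerivAt_snd s))).congr_deriv ?_
    ring
  exact is_const_of_deriv_eq_zero (fun s ↦ (hderiv s).differentiableAt) (fun s ↦ (hderiv s).deriv)
    s t

theorem continuous_fst (h : IsAirySolution Y Z) : Continuous Y :=
  continuous_iff_continuousAt.2 fun s ↦ (h.hasDerivAt_fst s).continuousAt

theorem continuous_snd (h : IsAirySolution Y Z) : Continuous Z :=
  continuous_iff_continuousAt.2 fun s ↦ (h.hasDerivAt_snd s).continuousAt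

end IsAirySolution

section Existence

open Complex

theorem hasDerivAt_neg_cube_div_nine (s : ℂ) : HasDerivAt (fun s : ℂ ↦ -s ^ 3 / 9) (-s ^ 2 / 3) s :=
  (((hasDerivAt_pow 3 s).neg).div_const 9).congr_deriv (by norm_num; ring)

theorem hasDerivAt_regularizedHGFun_neg_cube_div_nine (c s : ℂ) :
    HasDerivAt (fun s ↦ regularizedHGFun 0 {c} (-s ^ 3 / 9))
      (-s ^ 2 / 3 * regularizedHGFun 0 {c + 1} (-s ^ 3 / 9)) s :=
  ((hasDerivAt_regularizedHGFun_singleton c _).comp s (hasDerivAt_neg_cube_div_nine s)).congr_deriv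
    (mul_comm _ _)

theorem Gamma_mul_regularizedHGFun_singleton_zero {c : ℂ} (hc : 0 < c.re) :
    Gamma c * regularizedHGFun 0 {c} 0 = 1 := by
  have hsum := hasSum_single (f := fun n : ℕ ↦ 1 / (n.factorial * Gamma (c + n)) * (0 : ℂ) ^ n) 0
    fun n hn ↦ by rw [zero_pow hn, mul_zero]
  rw [(hasSum_regularizedHGFun_singleton c 0).unique hsum]
  simp [Gamma_ne_zero_of_re_pos hc]

theorem exists_isAirySolution_cosineLike :
    ∃ Y Z : ℝ → ℝ, IsAirySolution Y Z ∧ Y 0 = 1 ∧ Z 0 = 0 := by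
  refine ⟨_, _, IsAirySolution.of_complex
    (Y := fun s ↦ Gamma (2 / 3) * regularizedHGFun 0 {2 / 3} (-s ^ 3 / 9))
    (Z := fun s ↦ Gamma (2 / 3) * (-s ^ 2 / 3 * regularizedHGFun 0 {2 / 3 + 1} (-s ^ 3 / 9)))
    (fun s ↦ (hasDerivAt_regularizedHGFun_neg_cube_div_nine _ s).const_mul _) (fun s ↦ ?_), ?_, ?_⟩
  · have hsq : HasDerivAt (fun s : ℂ ↦ -s ^ 2 / 3) (-2 * s / 3) s :=
      (((hasDerivAt_pow 2 s).neg).div_const 3).congr_deriv (by norm_num)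
    refine ((hsq.mul
      (hasDerivAt_regularizedHGFun_neg_cube_div_nine _ s)).const_mul _).congr_deriv ?_
    rw [regularizedHGFun_singleton_contiguous (2 / 3), add_assoc, one_add_one_eq_two]
    ring
  · simp [-mul_re, Gamma_mul_regularizedHGFun_singleton_zero]
  · simp

theorem exists_isAirySolution_sineLike :
    ∃ Y Z : ℝ → ℝ, IsAirySolution Y Z ∧ Y 0 = 0 ∧ Z 0 = 1 := by
  refine ⟨_, _, IsAirySolution.of_complex
    (Y := fun s ↦ Gamma (1 / 3) / 3 * (s * regularizedHGFun 0 {1 / 3 + 1} (-s ^ 3 / 9)))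
    (Z := fun s ↦ Gamma (1 / 3) * regularizedHGFun 0 {1 / 3} (-s ^ 3 / 9))
    (fun s ↦ ?_) (fun s ↦ ?_), ?_, ?_⟩
  · refine (((hasDerivAt_id s).mul
      (hasDerivAt_regularizedHGFun_neg_cube_div_nine _ s)).const_mul _).congr_deriv ?_
    rw [regularizedHGFun_singleton_contiguous (1 / 3), add_assoc, one_add_one_eq_two]
    simp only [id]
    ring
  · refine ((hasDerivAt_regularizedHGFun_neg_cube_div_nine _ s).const_mul _).congr_deriv ?_
    ring
  · simp
  · simp [-mul_re, -one_div, Gamma_mul_regularizedHGFun_singleton_zero]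

end Existence

/-- The adiabatic energy `√s Y² + Z² / √s` of a solution of the Airy equation together with its
first-order Liouville–Green correction, which makes the logarithmic derivative `O(s⁻²)`. -/
noncomputable def airyEnergy (Y Z : ℝ → ℝ) (s : ℝ) : ℝ :=
  √s * Y s ^ 2 + Z s ^ 2 / √s + 1 / 2 * (Y s * Z s) / √s ^ 3

theorem le_airyEnergy (Y Z : ℝ → ℝ) {s : ℝ} (hs : 1 ≤ s) :
    3 / 4 * (√s * Y s ^ 2 + Z s ^ 2 / √s) ≤ airyEnergy Y Z s := by
  have hr : 1 ≤ √s := Real.one_le_sqrt.2 hs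
  have : 0 < √s := one_pos.trans_le hr
  have hdiff : airyEnergy Y Z s - 3 / 4 * (√s * Y s ^ 2 + Z s ^ 2 / √s) =
      (√s ^ 4 * Y s ^ 2 + √s ^ 2 * Z s ^ 2 + 2 * (Y s * Z s)) / (4 * √s ^ 3) := by
    rw [airyEnergy]
    field_simp
    ring
  have hnum : 0 ≤ √s ^ 4 * Y s ^ 2 + √s ^ 2 * Z s ^ 2 + 2 * (Y s * Z s) := by
    nlinarith [sq_nonneg (Y s + Z s), mul_le_mul_of_nonneg_right (one_le_pow₀ hr (n := 4))
      (sq_nonneg (Y s)), mul_le_mul_of_nonneg_right (one_le_pow₀ hr (n := 2)) (sq_nonneg (Z s))]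
  exact sub_nonneg.1 (hdiff ▸ by positivity)

theorem airyEnergy_nonneg (Y Z : ℝ → ℝ) {s : ℝ} (hs : 1 ≤ s) : 0 ≤ airyEnergy Y Z s :=
  le_trans (by positivity) (le_airyEnergy Y Z hs)

theorem airyEnergy_deriv_le_div_sq (Y Z : ℝ → ℝ) {s : ℝ} (hs : 1 ≤ s) :
    -(3 / 4) * (Y s * Z s) / √s ^ 5 ≤ airyEnergy Y Z s / s ^ 2 := by
  have hr : 1 ≤ √s := Real.one_le_sqrt.2 hs
  have : 0 < √s := one_pos.trans_le hr
  have hYZ : -(Y s * Z s) ≤ √s ^ 2 * Y s ^ 2 + Z s ^ 2 := by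
    nlinarith [sq_nonneg (Y s + Z s), sq_nonneg (Z s),
      mul_le_mul_of_nonneg_right (one_le_pow₀ hr (n := 2)) (sq_nonneg (Y s))]
  calc -(3 / 4) * (Y s * Z s) / √s ^ 5
      = 3 / 4 * -(Y s * Z s) / √s ^ 5 := by ring
    _ ≤ 3 / 4 * (√s ^ 2 * Y s ^ 2 + Z s ^ 2) / √s ^ 5 := by gcongr
    _ = 3 / 4 * (√s * Y s ^ 2 + Z s ^ 2 / √s) / (√s ^ 2) ^ 2 := by field_simp
    _ = 3 / 4 * (√s * Y s ^ 2 + Z s ^ 2 / √s) / s ^ 2 := by rw [Real.sq_sqrt (by linarith)]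
    _ ≤ airyEnergy Y Z s / s ^ 2 := by gcongr; exact le_airyEnergy Y Z hs

namespace IsAirySolution

variable {Y Z : ℝ → ℝ}

theorem hasDerivAt_airyEnergy (h : IsAirySolution Y Z) {s : ℝ} (hs : 0 < s) :
    HasDerivAt (airyEnergy Y Z) (-(3 / 4) * (Y s * Z s) / √s ^ 5) s := by
  have hr : 0 < √s := Real.sqrt_pos.2 hs
  have hsqrt := Real.hasDerivAt_sqrt hs.ne'
  have hY := h.hasDerivAt_fst s
  have hZ := h.hasDerivAt_snd s
  refine (((hsqrt.mul (hY.pow 2)).add ((hZ.pow 2).div hsqrt hr.ne')).add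
    (((hY.mul hZ).const_mul (1 / 2)).div (hsqrt.pow 3) (pow_pos hr 3).ne')).congr_deriv ?_
  have hsq : √s ^ 2 = s := Real.sq_sqrt hs.le
  simp only [Pi.mul_apply, Pi.pow_apply]
  generalize √s = r at *
  subst hsq
  field_simp
  ring

theorem antitoneOn_airyEnergy_mul_exp (h : IsAirySolution Y Z) :
    AntitoneOn (fun s ↦ airyEnergy Y Z s * Real.exp s⁻¹) (Set.Ici 1) := by
  have hderiv {s : ℝ} (hs : 1 ≤ s) : HasDerivAt (fun s ↦ airyEnergy Y Z s * Real.exp s⁻¹)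
      ((-(3 / 4) * (Y s * Z s) / √s ^ 5 - airyEnergy Y Z s / s ^ 2) * Real.exp s⁻¹) s := by
    have hs0 : 0 < s := one_pos.trans_le hs
    refine ((h.hasDerivAt_airyEnergy hs0).mul (hasDerivAt_inv hs0.ne').exp).congr_deriv ?_
    ring
  refine antitoneOn_of_hasDerivWithinAt_nonpos (convex_Ici 1)
    (fun s hs ↦ (hderiv hs).continuousAt.continuousWithinAt)
    (fun s hs ↦ (hderiv (interior_subset hs)).hasDerivWithinAt) fun s hs ↦ ?_
  exact mul_nonpos_of_nonpos_of_nonneg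
    (sub_nonpos.2 (airyEnergy_deriv_le_div_sq Y Z (interior_subset hs))) (Real.exp_pos _).le

theorem sq_add_sq_le (h : IsAirySolution Y Z) {s : ℝ} (hs : 1 ≤ s) :
    Y s ^ 2 + Z s ^ 2 ≤ 5 / 3 * Real.exp 1 * (Y 1 ^ 2 + Z 1 ^ 2) * √s := by
  have hr : 1 ≤ √s := Real.one_le_sqrt.2 hs
  have hr0 : 0 < √s := one_pos.trans_le hr
  have hinit : airyEnergy Y Z 1 ≤ 5 / 4 * (Y 1 ^ 2 + Z 1 ^ 2) := by
    simp only [airyEnergy, Real.sqrt_one, one_pow, div_one, one_mul]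
    nlinarith [sq_nonneg (Y 1 - Z 1)]
  have hmono : airyEnergy Y Z s ≤ airyEnergy Y Z 1 * Real.exp 1 :=
    calc airyEnergy Y Z s ≤ airyEnergy Y Z s * Real.exp s⁻¹ :=
          le_mul_of_one_le_right (airyEnergy_nonneg Y Z hs) (Real.one_le_exp (by positivity))
      _ ≤ airyEnergy Y Z 1 * Real.exp 1⁻¹ :=
          h.antitoneOn_airyEnergy_mul_exp Set.self_mem_Ici hs hs
      _ = airyEnergy Y Z 1 * Real.exp 1 := by rw [inv_one]
  have hY : Y s ^ 2 ≤ √s * (√s * Y s ^ 2) := by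
    nlinarith [mul_le_mul_of_nonneg_right (one_le_pow₀ hr (n := 2)) (sq_nonneg (Y s))]
  calc Y s ^ 2 + Z s ^ 2
      ≤ √s * (√s * Y s ^ 2) + √s * (Z s ^ 2 / √s) := by
        rw [mul_div_cancel₀ _ hr0.ne']
        gcongr
    _ = 4 / 3 * √s * (3 / 4 * (√s * Y s ^ 2 + Z s ^ 2 / √s)) := by ring
    _ ≤ 4 / 3 * √s * (airyEnergy Y Z 1 * Real.exp 1) :=
        mul_le_mul_of_nonneg_left ((le_airyEnergy Y Z hs).trans hmono) (by positivity)
    _ ≤ 4 / 3 * √s * (5 / 4 * (Y 1 ^ 2 + Z 1 ^ 2) * Real.exp 1) := by gcongr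
    _ = 5 / 3 * Real.exp 1 * (Y 1 ^ 2 + Z 1 ^ 2) * √s := by ring

end IsAirySolution

/-- Solutions `Y s₀` of the Airy equation, with derivatives `Z s₀`, normalised to have the Cauchy
data `(0, 1)` at `s₀` and depending continuously on `s₀`. -/
structure IsAiryPropagator (Y Z : ℝ → ℝ → ℝ) : Prop where
  isAirySolution (s₀ : ℝ) : IsAirySolution (Y s₀) (Z s₀)
  fst_self (s : ℝ) : Y s s = 0
  snd_self (s : ℝ) : Z s s = 1
  continuous_fst : Continuous fun p : ℝ × ℝ ↦ Y p.1 p.2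
  continuous_snd : Continuous fun p : ℝ × ℝ ↦ Z p.1 p.2

theorem exists_isAiryPropagator : ∃ Y Z, IsAiryPropagator Y Z := by
  obtain ⟨Y₁, Z₁, h₁, hY₁, hZ₁⟩ := exists_isAirySolution_cosineLike
  obtain ⟨Y₂, Z₂, h₂, hY₂, hZ₂⟩ := exists_isAirySolution_sineLike
  have cY₁ := h₁.continuous_fst
  have cZ₁ := h₁.continuous_snd
  have cY₂ := h₂.continuous_fst
  have cZ₂ := h₂.continuous_snd
  refine ⟨fun s₀ s ↦ -Y₂ s₀ * Y₁ s + Y₁ s₀ * Y₂ s, fun s₀ s ↦ -Y₂ s₀ * Z₁ s + Y₁ s₀ * Z₂ s,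
    fun s₀ ↦ h₁.linearCombination h₂ _ _, fun s ↦ by ring, fun s ↦ ?_, by fun_prop, by fun_prop⟩
  have hW := h₁.wronskian_eq h₂ s 0
  rw [hY₁, hZ₁, hY₂, hZ₂] at hW
  linarith

theorem IsAiryPropagator.exists_sq_add_sq_le {Y Z : ℝ → ℝ → ℝ} (h : IsAiryPropagator Y Z)
    {K : Set ℝ} (hK : IsCompact K) :
    ∃ C, 0 ≤ C ∧ ∀ s₀ ∈ K, ∀ s, 1 ≤ s → Y s₀ s ^ 2 + Z s₀ s ^ 2 ≤ C * √s := by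
  have hcont : Continuous fun s₀ ↦ 5 / 3 * Real.exp 1 * (Y s₀ 1 ^ 2 + Z s₀ 1 ^ 2) := by
    have hY : Continuous fun s₀ ↦ Y s₀ 1 := h.continuous_fst.comp (.prodMk_left 1)
    have hZ : Continuous fun s₀ ↦ Z s₀ 1 := h.continuous_snd.comp (.prodMk_left 1)
    fun_prop
  obtain ⟨C, hC⟩ := hK.bddAbove_image hcont.continuousOn
  refine ⟨max C 0, le_max_right _ _, fun s₀ hs₀ s hs ↦ ?_⟩
  calc Y s₀ s ^ 2 + Z s₀ s ^ 2
      ≤ 5 / 3 * Real.exp 1 * (Y s₀ 1 ^ 2 + Z s₀ 1 ^ 2) * √s :=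
        (h.isAirySolution s₀).sq_add_sq_le hs
    _ ≤ max C 0 * √s := by
        gcongr
        exact (hC (Set.mem_image_of_mem _ hs₀)).trans (le_max_left _ _)

end AiryEquation

section SquareIntegrable

theorem eLpNorm_two_eq_ofReal_sqrt {α F : Type*} [MeasurableSpace α] {μ : Measure α}
    [NormedAddCommGroup F] {f : α → F} (hf : MemLp f 2 μ) :
    eLpNorm f 2 μ = ENNReal.ofReal √(∫ x, ‖f x‖ ^ 2 ∂μ) := by
  rw [hf.eLpNorm_eq_integral_rpow_norm two_ne_zero ENNReal.ofNat_ne_top, Real.sqrt_eq_rpow]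
  simp

theorem ae_eq_zero_of_tendsto_eLpNorm {α F : Type*} [MeasurableSpace α] {μ : Measure α}
    [NormedAddCommGroup F] {p : ENNReal} (hp : 1 ≤ p) {f : α → F} {φ : ℕ → α → F}
    (hf : AEStronglyMeasurable f μ) (hφ : ∀ n, AEStronglyMeasurable (φ n) μ)
    (hlim : Tendsto (fun n ↦ eLpNorm (φ n - f) p μ) atTop (𝓝 0))
    (hzero : Tendsto (fun n ↦ eLpNorm (φ n) p μ) atTop (𝓝 0)) : f =ᵐ[μ] 0 := by
  have hle (n : ℕ) : eLpNorm f p μ ≤ eLpNorm (φ n) p μ + eLpNorm (φ n - f) p μ := by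
    simpa only [sub_sub_cancel] using eLpNorm_sub_le (hφ n) ((hφ n).sub hf) hp
  have hnorm : eLpNorm f p μ = 0 :=
    le_zero_iff.1 <| ge_of_tendsto' (by simpa using hzero.add hlim) hle
  exact (eLpNorm_eq_zero_iff hf (one_pos.trans_le hp).ne').1 hnorm

variable {V F : Type*} [NormedAddCommGroup V] [InnerProductSpace ℝ V] [FiniteDimensional ℝ V]
  [MeasurableSpace V] [BorelSpace V] [NormedAddCommGroup F] [InnerProductSpace ℂ F]
  [CompleteSpace F]

theorem integral_fourier_smul_eq (g : SchwartzMap V ℂ) {f : V → F} (hf : Integrable f) :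
    ∫ x, 𝓕 g x • f x = ∫ x, g x • 𝓕 f x := by
  have h := VectorFourier.integral_fourierIntegral_smul_eq_flip (L := innerₗ V)
    (μ := (volume : Measure V)) (ν := (volume : Measure V)) Real.continuous_fourierChar
    continuous_inner g.integrable hf
  simpa only [flip_innerₗ] using! h

theorem integral_smul_fourier_toLp (g : SchwartzMap V ℂ) {f : V → F} (hf : MemLp f 2) :
    ∫ x, g x • (𝓕 (hf.toLp f) : Lp F 2 (volume : Measure V)) x = ∫ x, 𝓕 g x • f x := by
  have h := congrArg (fun T ↦ T g) (Lp.fourier_toTemperedDistribution_eq (hf.toLp f))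
  simp only [TemperedDistribution.fourier_apply, Lp.toTemperedDistribution_apply] at h
  rw [← h]
  refine integral_congr_ae ?_
  filter_upwards [hf.coeFn_toLp] with x hx
  rw [hx]

theorem fourier_toLp_ae_eq {f : V → F} (hf₁ : Integrable f) (hf₂ : MemLp f 2) :
    (𝓕 (hf₂.toLp f) : Lp F 2 (volume : Measure V)) =ᵐ[volume] 𝓕 f := by
  have hL : LocallyIntegrable (𝓕 (hf₂.toLp f) : Lp F 2 (volume : Measure V)) :=
    (Lp.memLp _).locallyIntegrable one_le_two
  have hR : LocallyIntegrable (𝓕 f) := Continuous.locallyIntegrable <|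
    VectorFourier.fourierIntegral_continuous Real.continuous_fourierChar
      (L := innerₗ V) continuous_inner hf₁
  refine ae_eq_of_integral_contDiff_smul_eq hL hR fun g hg hgs ↦ ?_
  have hgℂ : ContDiff ℝ (⊤ : ℕ∞) fun x ↦ (g x : ℂ) := Complex.ofRealCLM.contDiff.comp hg
  let G : SchwartzMap V ℂ :=
    (hgs.comp_left (g := fun t : ℝ ↦ (t : ℂ)) Complex.ofReal_zero).toSchwartzMap hgℂ
  have hG (φ : V → F) (x : V) : g x • φ x = G x • φ x := (Complex.coe_smul (g x) (φ x)).symm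
  simp_rw [hG]
  rw [integral_smul_fourier_toLp, integral_fourier_smul_eq G hf₁]

theorem memLp_two_fourier {f : V → F} (hf₁ : Integrable f) (hf₂ : MemLp f 2) : MemLp (𝓕 f) 2 :=
  (memLp_congr_ae (fourier_toLp_ae_eq hf₁ hf₂)).1 (Lp.memLp _)

theorem eLpNorm_two_fourier {f : V → F} (hf₁ : Integrable f) (hf₂ : MemLp f 2) :
    eLpNorm (𝓕 f) 2 = eLpNorm f 2 := by
  rw [← eLpNorm_congr_ae (fourier_toLp_ae_eq hf₁ hf₂), ← Lp.enorm_def, ← Lp.enorm_toLp hf₂,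
    ← ofReal_norm, ← ofReal_norm, Lp.norm_fourier_eq]

theorem integral_sq_norm_fourier {f : V → F} (hf₁ : Integrable f) (hf₂ : MemLp f 2) :
    ∫ k, ‖𝓕 f k‖ ^ 2 = ∫ x, ‖f x‖ ^ 2 := by
  have h := eLpNorm_two_fourier hf₁ hf₂
  rw [eLpNorm_two_eq_ofReal_sqrt hf₂, eLpNorm_two_eq_ofReal_sqrt (memLp_two_fourier hf₁ hf₂),
    ENNReal.ofReal_eq_ofReal_iff (by positivity) (by positivity)] at h
  exact (Real.sqrt_inj (by positivity) (by positivity)).1 h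

theorem ae_eq_zero_of_tendsto_eLpNorm_fourier {f : V → F} {φ : ℕ → V → F} (hf : MemLp f 2)
    (hφ₁ : ∀ n, Integrable (φ n)) (hφ₂ : ∀ n, MemLp (φ n) 2)
    (hlim : Tendsto (fun n ↦ eLpNorm (φ n - f) 2) atTop (𝓝 0))
    (hK : ∀ K : Set V, IsCompact K →
      Tendsto (fun n ↦ eLpNorm (𝓕 (φ n)) 2 (volume.restrict K)) atTop (𝓝 0)) :
    f =ᵐ[volume] 0 := by
  let fhat : Lp F 2 (volume : Measure V) := 𝓕 (hf.toLp f)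
  have hlimhat : Tendsto (fun n ↦ eLpNorm (𝓕 (φ n) - ⇑fhat) 2) atTop (𝓝 0) := by
    have h := (Lp.fourierTransformₗᵢ V F).continuous.tendsto _ |>.comp
      ((Lp.tendsto_Lp_iff_tendsto_eLpNorm'' φ hφ₂ f hf).2 hlim)
    refine ((Lp.tendsto_Lp_iff_tendsto_eLpNorm' _ _).1 h).congr fun n ↦ eLpNorm_congr_ae ?_
    exact (fourier_toLp_ae_eq (hφ₁ n) (hφ₂ n)).sub .rfl
  have hzeroK (K : Set V) (hKc : IsCompact K) : fhat =ᵐ[volume.restrict K] 0 := by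
    refine ae_eq_zero_of_tendsto_eLpNorm one_le_two (Lp.aestronglyMeasurable fhat).restrict
      (fun n ↦ (memLp_two_fourier (hφ₁ n) (hφ₂ n)).aestronglyMeasurable.restrict) ?_ (hK K hKc)
    exact tendsto_of_tendsto_of_tendsto_of_le_of_le tendsto_const_nhds hlimhat
      (fun _ ↦ zero_le) fun _ ↦ eLpNorm_mono_measure _ Measure.restrict_le_self
  have hzero : fhat = 0 := by
    refine Lp.ext (EventuallyEq.trans ?_ (Lp.coeFn_zero F 2 volume).symm)
    have h := (ae_restrict_iUnion_iff (compactCovering V) _).2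
      fun n ↦ hzeroK _ (isCompact_compactCovering V n)
    rwa [iUnion_compactCovering, Measure.restrict_univ] at h
  have hf0 : hf.toLp f = 0 := (Lp.fourierTransformₗᵢ V F).map_eq_zero_iff.1 hzero
  exact hf.coeFn_toLp.symm.trans (hf0 ▸ Lp.coeFn_zero F 2 volume)

end SquareIntegrable

section PartialDerivatives

variable {u : ℝ × ℝ → ℂ} {p : ℝ × ℝ} {W : Set (ℝ × ℝ)}

theorem hasDerivAt_pd1 (h : DifferentiableAt ℝ u p) :
    HasDerivAt (fun t ↦ u (t, p.2)) (pd1 u p) p.1 :=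
  (h.comp p.1 (by fun_prop : DifferentiableAt ℝ (fun t : ℝ ↦ (t, p.2)) p.1)).hasDerivAt

theorem hasDerivAt_pd2 (h : DifferentiableAt ℝ u p) :
    HasDerivAt (fun t ↦ u (p.1, t)) (pd2 u p) p.2 :=
  (h.comp p.2 (by fun_prop : DifferentiableAt ℝ (fun t : ℝ ↦ (p.1, t)) p.2)).hasDerivAt

theorem pd1_eq_fderiv (h : DifferentiableAt ℝ u p) : pd1 u p = fderiv ℝ u p (1, 0) :=
  (h.hasFDerivAt.comp_hasDerivAt p.1
    ((hasDerivAt_id p.1).prodMk (hasDerivAt_const p.1 p.2))).deriv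

theorem pd2_eq_fderiv (h : DifferentiableAt ℝ u p) : pd2 u p = fderiv ℝ u p (0, 1) :=
  (h.hasFDerivAt.comp_hasDerivAt p.2
    ((hasDerivAt_const p.2 p.1).prodMk (hasDerivAt_id p.2))).deriv

theorem contDiffOn_pd1 {m n : WithTop ℕ∞} (hW : IsOpen W) (hu : ContDiffOn ℝ n u W)
    (hmn : m + 1 ≤ n) : ContDiffOn ℝ m (pd1 u) W :=
  ((hu.fderiv_of_isOpen hW hmn).clm_apply contDiffOn_const).congr fun _ hp ↦ pd1_eq_fderiv <|
    (hu.contDiffAt (hW.mem_nhds hp)).differentiableAt (by rintro rfl; simp at hmn)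

theorem contDiffOn_pd2 {m n : WithTop ℕ∞} (hW : IsOpen W) (hu : ContDiffOn ℝ n u W)
    (hmn : m + 1 ≤ n) : ContDiffOn ℝ m (pd2 u) W :=
  ((hu.fderiv_of_isOpen hW hmn).clm_apply contDiffOn_const).congr fun _ hp ↦ pd2_eq_fderiv <|
    (hu.contDiffAt (hW.mem_nhds hp)).differentiableAt (by rintro rfl; simp at hmn)

end PartialDerivatives

section CutoffFourier

theorem fourier_add_apply {V F : Type*} [NormedAddCommGroup V] [InnerProductSpace ℝ V]
    [MeasurableSpace V] [BorelSpace V] [FiniteDimensional ℝ V] [NormedAddCommGroup F]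
    [NormedSpace ℂ F] {f g : V → F} (hf : Integrable f) (hg : Integrable g) (k : V) :
    𝓕 (fun t ↦ f t + g t) k = 𝓕 f k + 𝓕 g k :=
  congrFun (VectorFourier.fourierIntegral_add Real.continuous_fourierChar continuous_inner
    (L := innerₗ V) hf hg) k

theorem fourier_smul_deriv {F : Type*} [NormedAddCommGroup F] [NormedSpace ℂ F]
    {χ : ℝ → ℝ} {g : ℝ → F} (hχ : ContDiff ℝ 1 χ) (hχs : HasCompactSupport χ)
    (hg : ContDiff ℝ 1 g) (k : ℝ) :
    𝓕 (fun t ↦ χ t • deriv g t) k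
      = (2 * Real.pi * Complex.I * k : ℂ) • 𝓕 (fun t ↦ χ t • g t) k
        - 𝓕 (fun t ↦ deriv χ t • g t) k := by
  have hχ' : Continuous (deriv χ) := hχ.continuous_deriv le_rfl
  have hg' : Continuous (deriv g) := hg.continuous_deriv le_rfl
  have hi₀ : Integrable fun t ↦ χ t • g t :=
    (hχ.continuous.smul hg.continuous).integrable_of_hasCompactSupport hχs.smul_right
  have hi₁ : Integrable fun t ↦ χ t • deriv g t :=
    (hχ.continuous.smul hg').integrable_of_hasCompactSupport hχs.smul_right
  have hi₂ : Integrable fun t ↦ deriv χ t • g t :=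
    (hχ'.smul hg.continuous).integrable_of_hasCompactSupport hχs.deriv.smul_right
  have hderiv : deriv (fun t ↦ χ t • g t) = fun t ↦ χ t • deriv g t + deriv χ t • g t :=
    funext fun t ↦ deriv_fun_smul (hχ.differentiable one_ne_zero t)
      (hg.differentiable one_ne_zero t)
  have h := congrFun (Real.fourier_deriv hi₀
    ((hχ.differentiable one_ne_zero).smul (hg.differentiable one_ne_zero))
    (hderiv ▸ hi₁.add hi₂)) k
  rw [hderiv, fourier_add_apply hi₁ hi₂] at h
  exact eq_sub_of_add_eq h

/-- The Fourier transform in the first variable of `u`, localized by the cutoff `χ`. -/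
noncomputable def cutoffFourier (χ : ℝ → ℝ) (u : ℝ × ℝ → ℂ) (k x : ℝ) : ℂ :=
  𝓕 (fun t ↦ χ t • u (t, x)) k

variable {χ : ℝ → ℝ} {u : ℝ × ℝ → ℂ} {x : ℝ}

theorem integrable_smul_slice (hχ : Continuous χ) (hχs : HasCompactSupport χ)
    (hu : Continuous fun t ↦ u (t, x)) : Integrable fun t ↦ χ t • u (t, x) :=
  (hχ.smul hu).integrable_of_hasCompactSupport hχs.smul_right

theorem cutoffFourier_pd11 (hχ : ContDiff ℝ 2 χ) (hχs : HasCompactSupport χ)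
    (hu : ContDiff ℝ 2 fun t ↦ u (t, x)) (k : ℝ) :
    cutoffFourier χ (pd11 u) k x
      = (2 * Real.pi * Complex.I * k) ^ 2 * cutoffFourier χ u k x
        - 2 * (2 * Real.pi * Complex.I * k) * cutoffFourier (deriv χ) u k x
        + cutoffFourier (deriv (deriv χ)) u k x := by
  have hχ' : ContDiff ℝ 1 (deriv χ) := by
    rw [← one_add_one_eq_two] at hχ; exact hχ.deriv'
  have hu' : ContDiff ℝ 1 (deriv fun t ↦ u (t, x)) := by
    rw [← one_add_one_eq_two] at hu; exact hu.deriv'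
  have h₁ := fourier_smul_deriv (hχ.of_le one_le_two) hχs hu' k
  have h₂ := fourier_smul_deriv (hχ.of_le one_le_two) hχs (hu.of_le one_le_two) k
  have h₃ := fourier_smul_deriv hχ' hχs.deriv (hu.of_le one_le_two) k
  simp only [smul_eq_mul] at h₁ h₂ h₃
  change 𝓕 (fun t ↦ χ t • deriv (deriv fun t ↦ u (t, x)) t) k = _
  rw [h₁, h₂, h₃]
  simp only [cutoffFourier]
  ring

theorem continuousOn_cutoffFourier {s : Set ℝ} (hχ : Continuous χ) (hχs : HasCompactSupport χ)
    (hu : ContinuousOn u (Set.univ ×ˢ s)) :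
    ContinuousOn (Function.uncurry (cutoffFourier χ u)) (Set.univ ×ˢ s) := by
  have h : ContinuousOn (fun q : (ℝ × ℝ) × ℝ ↦
      Real.fourierChar (-(q.2 * q.1.1)) • χ q.2 • u (q.2, q.1.2))
      ((Set.univ ×ˢ s) ×ˢ Set.univ) := by
    refine (Real.continuous_fourierChar.comp (by fun_prop)).continuousOn.smul
      ((hχ.comp continuous_snd).continuousOn.smul ?_)
    exact hu.comp (by fun_prop) fun q hq ↦ ⟨trivial, hq.1.2⟩
  refine (continuousOn_integral_of_compact_support hχs h fun p t _ ht ↦ ?_).congr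
    fun p _ ↦ Real.fourier_real_eq _ _
  rw [image_eq_zero_of_notMem_tsupport ht, zero_smul, smul_zero]

theorem hasDerivAt_cutoffFourier {s : Set ℝ} (hs : IsOpen s) (hχ : Continuous χ)
    (hχs : HasCompactSupport χ) (hu : ContDiffOn ℝ 1 u (Set.univ ×ˢ s)) (k : ℝ) (hx : x ∈ s) :
    HasDerivAt (cutoffFourier χ u k) (cutoffFourier χ (pd2 u) k x) x := by
  have hU : IsOpen (Set.univ ×ˢ s : Set (ℝ × ℝ)) := isOpen_univ.prod hs
  have hslice {w : ℝ × ℝ → ℂ} (hw : ContinuousOn w (Set.univ ×ˢ s)) {y : ℝ} (hy : y ∈ s) :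
      Continuous fun t ↦ w (t, y) :=
    hw.comp_continuous (by fun_prop) fun _ ↦ ⟨trivial, hy⟩
  have hpd : ContinuousOn (pd2 u) (Set.univ ×ˢ s) :=
    (contDiffOn_pd2 (m := 0) hU hu le_rfl).continuousOn
  obtain ⟨N, hNx, hNs, hN⟩ := local_compact_nhds (hs.mem_nhds hx)
  obtain ⟨C, hC⟩ := (hχs.isCompact.prod hN).exists_bound_of_continuousOn
    (hpd.mono (Set.prod_mono (Set.subset_univ _) hNs))
  have hint {w : ℝ × ℝ → ℂ} (hw : ContinuousOn w (Set.univ ×ˢ s)) {y : ℝ} (hy : y ∈ s) :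
      Integrable fun t ↦ Real.fourierChar (-(t * k)) • χ t • w (t, y) :=
    ((Real.continuous_fourierChar.comp (by fun_prop)).smul
      (hχ.smul (hslice hw hy))).integrable_of_hasCompactSupport hχs.smul_right.smul_left
  unfold cutoffFourier
  simp only [Real.fourier_real_eq]
  refine (hasDerivAt_integral_of_dominated_loc_of_deriv_le (bound := fun t ↦ ‖χ t‖ * C) hNx
    (F := fun y t ↦ Real.fourierChar (-(t * k)) • χ t • u (t, y))
    (F' := fun y t ↦ Real.fourierChar (-(t * k)) • χ t • pd2 u (t, y)) ?_
    (hint hu.continuousOn hx) (hint hpd hx).aestronglyMeasurable ?_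
    ((hχ.norm.mul continuous_const).integrable_of_hasCompactSupport hχs.norm.mul_right) ?_).2
  · filter_upwards [hs.mem_nhds hx] with y hy
    exact (hint hu.continuousOn hy).aestronglyMeasurable
  · refine .of_forall fun t y hy ↦ ?_
    rw [Circle.norm_smul, norm_smul]
    by_cases ht : t ∈ tsupport χ
    · gcongr
      exact hC (t, y) ⟨ht, hy⟩
    · simp [image_eq_zero_of_notMem_tsupport ht]
  · refine .of_forall fun t y hy ↦ ?_
    have hty := (hu.contDiffAt (hU.mem_nhds ⟨trivial, hNs hy⟩)).differentiableAt one_ne_zero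
      (x := (t, y))
    exact ((hasDerivAt_pd2 hty).const_smul (χ t)).const_smul (Real.fourierChar (-(t * k)))

/-- The forcing term produced by the cutoff `χ` in the Airy equation for `cutoffFourier χ u k`. -/
noncomputable def cutoffError (χ : ℝ → ℝ) (u : ℝ × ℝ → ℂ) (k x : ℝ) : ℂ :=
  2 * (2 * Real.pi * Complex.I * k) * cutoffFourier (deriv χ) u k x
    - cutoffFourier (deriv (deriv χ)) u k x

theorem hasDerivAt_cutoffFourier_pd2 {E : ℝ} {s : Set ℝ} (hs : IsOpen s) (hχ : ContDiff ℝ 2 χ)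
    (hχs : HasCompactSupport χ) (hu : ContDiffOn ℝ 2 u (Set.univ ×ˢ s))
    (hpde : ∀ p ∈ Set.univ ×ˢ s, GravityHelmholtzAt E u p) (k : ℝ) (hx : x ∈ s) :
    HasDerivAt (cutoffFourier χ (pd2 u) k)
      (-((E + x - (2 * Real.pi * k) ^ 2 : ℝ) * cutoffFourier χ u k x) + cutoffError χ u k x) x := by
  have hU : IsOpen (Set.univ ×ˢ s : Set (ℝ × ℝ)) := isOpen_univ.prod hs
  have hslice {n : WithTop ℕ∞} {w : ℝ × ℝ → ℂ} (hw : ContDiffOn ℝ n w (Set.univ ×ˢ s)) :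
      ContDiff ℝ n fun t ↦ w (t, x) :=
    hw.comp_contDiff (by fun_prop) fun _ ↦ ⟨trivial, hx⟩
  have h11 : ContDiffOn ℝ 0 (pd11 u) (Set.univ ×ˢ s) :=
    contDiffOn_pd1 (m := 0) (n := 1) hU (contDiffOn_pd1 hU hu one_add_one_eq_two.le) (by simp)
  have h22 : ContDiffOn ℝ 0 (pd22 u) (Set.univ ×ˢ s) :=
    contDiffOn_pd2 (m := 0) (n := 1) hU (contDiffOn_pd2 hU hu one_add_one_eq_two.le) (by simp)
  have hi {w : ℝ × ℝ → ℂ} (hw : ContDiffOn ℝ 0 w (Set.univ ×ˢ s)) :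
      Integrable fun t ↦ χ t • w (t, x) :=
    integrable_smul_slice hχ.continuous hχs (hslice hw).continuous
  have hsum : cutoffFourier χ (pd11 u) k x + cutoffFourier χ (pd22 u) k x
      = -(E + x : ℝ) * cutoffFourier χ u k x := calc
    _ = 𝓕 (fun t ↦ χ t • pd11 u (t, x) + χ t • pd22 u (t, x)) k :=
      (fourier_add_apply (hi h11) (hi h22) k).symm
    _ = 𝓕 ((-(E + x : ℝ) : ℂ) • fun t ↦ χ t • u (t, x)) k := by
      refine congrFun (congrArg 𝓕 (funext fun t ↦ ?_)) k
      have h := hpde (t, x) ⟨trivial, hx⟩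
      simp only [GravityHelmholtzAt] at h
      simp only [Pi.smul_apply, Complex.real_smul, smul_eq_mul]
      linear_combination (χ t : ℂ) * h
    _ = _ := congrFun (VectorFourier.fourierIntegral_const_smul _ _ _ _ _) k
  refine (hasDerivAt_cutoffFourier hs hχ.continuous hχs
    (contDiffOn_pd2 hU hu one_add_one_eq_two.le) k hx).congr_deriv ?_
  change cutoffFourier χ (pd22 u) k x = _
  have h := cutoffFourier_pd11 hχ hχs (hslice hu) k
  rw [cutoffError, eq_sub_of_add_eq' hsum, h]
  push_cast
  linear_combination (-4 * Real.pi ^ 2 * k ^ 2 * cutoffFourier χ u k x : ℂ) * Complex.I_sq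

theorem norm_cutoffFourier_le (hχ : MemLp χ 2) (hu : MemLp (fun t ↦ u (t, x)) 2) (k : ℝ) :
    ‖cutoffFourier χ u k x‖ ≤ √(∫ t, χ t ^ 2) * √(∫ t, ‖u (t, x)‖ ^ 2) := by
  calc _ ≤ ∫ t, ‖χ t • u (t, x)‖ :=
        VectorFourier.norm_fourierIntegral_le_integral_norm _ _ _ _ _
    _ = ∫ t, ‖χ t‖ * ‖u (t, x)‖ := by simp only [norm_smul]
    _ ≤ _ := by
      have h := integral_mul_norm_le_Lp_mul_Lq (p := 2) (q := 2) (μ := volume) .two_two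
        (f := fun t ↦ ‖χ t‖) (g := fun t ↦ ‖u (t, x)‖) (by simpa using hχ.norm)
        (by simpa using hu.norm)
      simpa [Real.sqrt_eq_rpow] using h

theorem norm_cutoffError_le (hχ₁ : MemLp (deriv χ) 2) (hχ₂ : MemLp (deriv (deriv χ)) 2)
    (hu : MemLp (fun t ↦ u (t, x)) 2) (k : ℝ) :
    ‖cutoffError χ u k x‖ ≤ (4 * Real.pi * |k| * √(∫ t, deriv χ t ^ 2)
      + √(∫ t, deriv (deriv χ) t ^ 2)) * √(∫ t, ‖u (t, x)‖ ^ 2) := by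
  calc _ ≤ ‖(2 * (2 * Real.pi * Complex.I * k) : ℂ)‖ * ‖cutoffFourier (deriv χ) u k x‖
        + ‖cutoffFourier (deriv (deriv χ)) u k x‖ := by
        rw [← norm_mul]; exact norm_sub_le _ _
    _ ≤ ‖(2 * (2 * Real.pi * Complex.I * k) : ℂ)‖
          * (√(∫ t, deriv χ t ^ 2) * √(∫ t, ‖u (t, x)‖ ^ 2))
        + √(∫ t, deriv (deriv χ) t ^ 2) * √(∫ t, ‖u (t, x)‖ ^ 2) := by
        gcongr
        exacts [norm_cutoffFourier_le hχ₁ hu k, norm_cutoffFourier_le hχ₂ hu k]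
    _ = _ := by
      simp only [norm_mul, Complex.norm_I, Complex.norm_real, Complex.norm_ofNat,
        Real.norm_eq_abs, abs_of_pos Real.pi_pos]
      ring

theorem memLp_two_smul_of_abs_le_one {g : ℝ → ℂ} (hχ : Continuous χ) (hχ₁ : ∀ t, |χ t| ≤ 1)
    (hg : MemLp g 2) : MemLp (fun t ↦ χ t • g t) 2 :=
  hg.mono (hχ.aestronglyMeasurable.smul hg.1) <| .of_forall fun t ↦ by
    rw [norm_smul]
    exact mul_le_of_le_one_left (norm_nonneg _) (hχ₁ t)

theorem setIntegral_sq_norm_cutoffFourier_le (hχ : Continuous χ) (hχs : HasCompactSupport χ)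
    (hχ₁ : ∀ t, |χ t| ≤ 1) (hu : Continuous fun t ↦ u (t, x))
    (hu₂ : MemLp (fun t ↦ u (t, x)) 2) (K : Set ℝ) :
    ∫ k in K, ‖cutoffFourier χ u k x‖ ^ 2 ≤ ∫ t, ‖u (t, x)‖ ^ 2 := by
  have hi := integrable_smul_slice hχ hχs hu
  have h₂ := memLp_two_smul_of_abs_le_one hχ hχ₁ hu₂
  calc _ ≤ ∫ k, ‖cutoffFourier χ u k x‖ ^ 2 :=
        setIntegral_le_integral ((memLp_two_fourier hi h₂).integrable_norm_pow two_ne_zero)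
          (.of_forall fun _ ↦ by positivity)
    _ = ∫ t, ‖χ t • u (t, x)‖ ^ 2 := integral_sq_norm_fourier hi h₂
    _ ≤ _ := by
      refine integral_mono (h₂.integrable_norm_pow two_ne_zero)
        (hu₂.integrable_norm_pow two_ne_zero) fun t ↦ ?_
      have : ‖χ t • u (t, x)‖ ≤ ‖u (t, x)‖ := by
        rw [norm_smul]
        exact mul_le_of_le_one_left (norm_nonneg _) (hχ₁ t)
      gcongr

end CutoffFourier

section Cutoff

/-- Smooth cutoffs on the line: a fixed bump function dilated by `n + 1`. -/
noncomputable def cutoff (n : ℕ) (t : ℝ) : ℝ :=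
  (⟨1, 2, one_pos, one_lt_two⟩ : ContDiffBump (0 : ℝ)) ((n + 1 : ℝ)⁻¹ * t)

theorem contDiff_cutoff (n : ℕ) {m : ℕ∞} : ContDiff ℝ m (cutoff n) :=
  (ContDiffBump.contDiff _).comp (by fun_prop)

theorem hasCompactSupport_cutoff (n : ℕ) : HasCompactSupport (cutoff n) :=
  (ContDiffBump.hasCompactSupport _).comp_homeomorph
    (Homeomorph.mulLeft₀ ((n + 1 : ℝ)⁻¹) (by positivity))

theorem abs_cutoff_le_one (n : ℕ) (t : ℝ) : |cutoff n t| ≤ 1 :=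
  abs_le.2 ⟨neg_one_lt_zero.le.trans (ContDiffBump.nonneg _), ContDiffBump.le_one _⟩

theorem eventually_cutoff_eq_one (t : ℝ) : ∀ᶠ n in atTop, cutoff n t = 1 := by
  filter_upwards [tendsto_natCast_atTop_atTop.eventually_ge_atTop |t|] with n hn
  refine ContDiffBump.one_of_mem_closedBall _ ?_
  rw [mem_closedBall_zero_iff, norm_mul, norm_inv, Real.norm_of_nonneg (by positivity),
    Real.norm_eq_abs, inv_mul_le_one₀ (by positivity)]
  linarith

theorem tendsto_integral_sq_iteratedDeriv_cutoff {j : ℕ} (hj : j ≠ 0) :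
    Tendsto (fun n ↦ ∫ t, iteratedDeriv j (cutoff n) t ^ 2) atTop (𝓝 0) := by
  set φ : ContDiffBump (0 : ℝ) := ⟨1, 2, one_pos, one_lt_two⟩
  have hint (n : ℕ) : ∫ t, iteratedDeriv j (cutoff n) t ^ 2
      = (n + 1 : ℝ)⁻¹ ^ (2 * j - 1) * ∫ t, iteratedDeriv j φ t ^ 2 := by
    have h : iteratedDeriv j (cutoff n)
        = fun t ↦ (n + 1 : ℝ)⁻¹ ^ j * iteratedDeriv j φ ((n + 1 : ℝ)⁻¹ * t) :=
      iteratedDeriv_comp_const_mul φ.contDiff _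
    simp only [h, mul_pow]
    rw [integral_const_mul, Measure.integral_comp_mul_left (fun t ↦ iteratedDeriv j φ t ^ 2),
      inv_inv, abs_of_pos (by positivity), smul_eq_mul, ← mul_assoc, ← pow_mul,
      show j * 2 = 2 * j - 1 + 1 by omega, pow_succ, inv_mul_cancel_right₀ (by positivity)]
  simp only [hint]
  have h0 : Tendsto (fun n : ℕ ↦ (n + 1 : ℝ)⁻¹) atTop (𝓝 0) := by
    simpa using tendsto_one_div_add_atTop_nhds_zero_nat (𝕜 := ℝ)
  simpa [show 2 * j - 1 ≠ 0 by omega] using (h0.pow (2 * j - 1)).mul_const _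

theorem tendsto_eLpNorm_cutoff_smul_sub {g : ℝ → ℂ} (hg : MemLp g 2) :
    Tendsto (fun n ↦ eLpNorm ((fun t ↦ cutoff n t • g t) - g) 2) atTop (𝓝 0) := by
  have hmem (n : ℕ) : MemLp (fun t ↦ cutoff n t • g t) 2 :=
    memLp_two_smul_of_abs_le_one (contDiff_cutoff n (m := 0)).continuous (abs_cutoff_le_one n) hg
  have hbound (n : ℕ) (t : ℝ) : ‖cutoff n t • g t - g t‖ ≤ 2 * ‖g t‖ := by
    calc ‖cutoff n t • g t - g t‖ ≤ |cutoff n t| * ‖g t‖ + ‖g t‖ := by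
          simpa only [norm_smul, Real.norm_eq_abs] using norm_sub_le (cutoff n t • g t) (g t)
      _ ≤ 2 * ‖g t‖ := by
          linarith [mul_le_mul_of_nonneg_right (abs_cutoff_le_one n t) (norm_nonneg (g t))]
  have hlim : Tendsto (fun n ↦ ∫ t, ‖cutoff n t • g t - g t‖ ^ 2) atTop (𝓝 (∫ _ : ℝ, (0 : ℝ))) := by
    refine tendsto_integral_of_dominated_convergence (fun t ↦ 4 * ‖g t‖ ^ 2)
      (fun n ↦ (((hmem n).sub hg).1.norm.pow 2)) (hg.integrable_norm_pow two_ne_zero |>.const_mul 4)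
      (fun n ↦ .of_forall fun t ↦ ?_) (.of_forall fun t ↦ ?_)
    · rw [norm_pow, norm_norm, show 4 * ‖g t‖ ^ 2 = (2 * ‖g t‖) ^ 2 by ring]
      gcongr
      exact hbound n t
    · refine tendsto_const_nhds.congr' ?_
      filter_upwards [eventually_cutoff_eq_one t] with n hn
      simp [hn]
  simp only [eLpNorm_two_eq_ofReal_sqrt ((hmem _).sub hg), Pi.sub_apply]
  simpa only [integral_zero, Real.sqrt_zero, ENNReal.ofReal_zero]
    using ENNReal.tendsto_ofReal hlim.sqrt

end Cutoff

section Wronskian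

variable {a X P : ℝ} {q y z : ℝ → ℝ} {v w ε : ℝ → ℂ} {x : ℝ}

theorem hasDerivAt_wronskian (hv : HasDerivAt v (w x) x)
    (hw : HasDerivAt w (-(q x * v x) + ε x) x) (hy : HasDerivAt y (z x) x)
    (hz : HasDerivAt z (-q x * y x) x) :
    HasDerivAt (fun x ↦ z x * v x - y x * w x) (-(y x * ε x)) x :=
  ((hz.ofReal_comp.mul hv).sub (hy.ofReal_comp.mul hw)).congr_deriv (by push_cast; ring)

theorem norm_wronskian_sub_le (hv : ∀ x ∈ Set.Icc a X, HasDerivAt v (w x) x)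
    (hw : ∀ x ∈ Set.Icc a X, HasDerivAt w (-(q x * v x) + ε x) x)
    (hy : ∀ x, HasDerivAt y (z x) x) (hz : ∀ x, HasDerivAt z (-q x * y x) x) (hya : y a = 0)
    (hza : z a = 1) (haX : a ≤ X) (hε : ∀ x ∈ Set.Icc a X, ‖y x * ε x‖ ≤ P) :
    ‖(z X * v X - y X * w X) - v a‖ ≤ P * (X - a) := by
  simpa only [hya, hza, Complex.ofReal_one, Complex.ofReal_zero, one_mul, zero_mul, sub_zero] using
    norm_image_sub_le_of_norm_deriv_le_segment'
      (fun x hx ↦ (hasDerivAt_wronskian (hv x hx) (hw x hx) (hy x) (hz x)).hasDerivWithinAt)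
      (fun x hx ↦ (norm_neg _).trans_le (hε x (Set.Ico_subset_Icc_self hx))) X
      (Set.right_mem_Icc.2 haX)

/- The correction `-s' y v` cancels the term of the derivative containing `w`, so that only `v`
itself has to be controlled. -/
theorem hasDerivAt_cutoff_wronskian {s s' s'' : ℝ → ℝ} (hv : HasDerivAt v (w x) x)
    (hw : HasDerivAt w (-(q x * v x) + ε x) x) (hy : HasDerivAt y (z x) x)
    (hz : HasDerivAt z (-q x * y x) x) (hs : HasDerivAt s (s' x) x)
    (hs' : HasDerivAt s' (s'' x) x) :
    HasDerivAt (fun x ↦ (1 - s x : ℝ) * (z x * v x - y x * w x) - (s' x * y x : ℝ) * v x)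
      (-((1 - s x : ℝ) * (y x * ε x)) - (s'' x * y x + 2 * s' x * z x : ℝ) * v x) x :=
  (((hs.const_sub 1).ofReal_comp.mul (hasDerivAt_wronskian hv hw hy hz)).sub
    ((hs'.mul hy).ofReal_comp.mul hv)).congr_deriv (by simp only [Pi.mul_apply]; push_cast; ring)

/-- The cubic transition from `0` at `X` to `1` at `X + 1`, with vanishing derivative at both ends;
it localises the Wronskian identity to `[X, X + 1]`. -/
def smoothstep (X x : ℝ) : ℝ := (x - X) ^ 2 * (3 - 2 * (x - X))

theorem hasDerivAt_smoothstep (X x : ℝ) :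
    HasDerivAt (smoothstep X) (6 * (x - X) * (1 - (x - X))) x :=
  have h := (hasDerivAt_id x).sub_const X
  ((h.pow 2).mul ((h.const_mul 2).const_sub 3)).congr_deriv (by simp; ring)

theorem hasDerivAt_smoothstep_deriv (X x : ℝ) :
    HasDerivAt (fun x ↦ 6 * (x - X) * (1 - (x - X))) (6 * (1 - 2 * (x - X))) x :=
  have h := (hasDerivAt_id x).sub_const X
  ((h.const_mul 6).mul (h.const_sub 1)).congr_deriv (by simp; ring)

theorem smoothstep_bounds (hx : x ∈ Set.Icc X (X + 1)) :
    |1 - smoothstep X x| ≤ 1 ∧ |6 * (1 - 2 * (x - X))| ≤ 6 ∧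
      |2 * (6 * (x - X) * (1 - (x - X)))| ≤ 3 := by
  obtain ⟨r, rfl⟩ : ∃ r, x = X + r := ⟨x - X, by ring⟩
  have hr₀ : 0 ≤ r := by linarith [hx.1]
  have hr₁ : 0 ≤ 1 - r := by linarith [hx.2]
  simp only [smoothstep, add_sub_cancel_left, abs_le]
  refine ⟨⟨?_, ?_⟩, ⟨?_, ?_⟩, ⟨?_, ?_⟩⟩ <;>
    nlinarith [mul_nonneg hr₀ hr₁, mul_nonneg (sq_nonneg r) hr₁, sq_nonneg (2 * r - 1),
      mul_nonneg hr₀ (sq_nonneg (1 - r)), sq_nonneg r]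

theorem norm_wronskian_le_add_integral (hv : ∀ x ∈ Set.Icc X (X + 1), HasDerivAt v (w x) x)
    (hw : ∀ x ∈ Set.Icc X (X + 1), HasDerivAt w (-(q x * v x) + ε x) x)
    (hy : ∀ x, HasDerivAt y (z x) x) (hz : ∀ x, HasDerivAt z (-q x * y x) x)
    (hε : ∀ x ∈ Set.Icc X (X + 1), ‖y x * ε x‖ ≤ P) :
    ‖z X * v X - y X * w X‖ ≤ P + ∫ x in X..(X + 1), (6 * |y x| + 3 * |z x|) * ‖v x‖ := by
  have hderiv (x : ℝ) (hx : x ∈ Set.Icc X (X + 1)) :=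
    hasDerivAt_cutoff_wronskian (s' := fun x ↦ 6 * (x - X) * (1 - (x - X)))
      (s'' := fun x ↦ 6 * (1 - 2 * (x - X))) (hv x hx) (hw x hx) (hy x) (hz x)
      (hasDerivAt_smoothstep X x) (hasDerivAt_smoothstep_deriv X x)
  have hbound (x : ℝ) (hx : x ∈ Set.Icc X (X + 1)) :
      ‖-((1 - smoothstep X x : ℝ) * (y x * ε x)) - (6 * (1 - 2 * (x - X)) * y x
        + 2 * (6 * (x - X) * (1 - (x - X))) * z x : ℝ) * v x‖
        ≤ P + (6 * |y x| + 3 * |z x|) * ‖v x‖ := by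
    obtain ⟨h₀, h₁, h₂⟩ := smoothstep_bounds hx
    refine (norm_sub_le _ _).trans (add_le_add ?_ ?_)
    · rw [norm_neg, norm_mul, Complex.norm_real, Real.norm_eq_abs]
      exact (mul_le_of_le_one_left (norm_nonneg _) h₀).trans (hε x hx)
    · rw [norm_mul, Complex.norm_real, Real.norm_eq_abs]
      gcongr
      refine (abs_add_le _ _).trans (add_le_add ?_ ?_) <;> rw [abs_mul] <;> gcongr
  have hcont : ContinuousOn v (Set.Icc X (X + 1)) := fun x hx ↦
    (hv x hx).continuousAt.continuousWithinAt
  have hint : IntervalIntegrable (fun x ↦ (6 * |y x| + 3 * |z x|) * ‖v x‖) volume X (X + 1) := by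
    have hyc : Continuous y := continuous_iff_continuousAt.2 fun x ↦ (hy x).continuousAt
    have hzc : Continuous z := continuous_iff_continuousAt.2 fun x ↦ (hz x).continuousAt
    exact ContinuousOn.intervalIntegrable_of_Icc (by linarith) (by fun_prop)
  have h := norm_sub_le_integral_of_norm_deriv_le_of_le (by linarith)
    (fun x hx ↦ (hderiv x hx).continuousAt.continuousWithinAt)
    (fun x hx ↦ (hderiv x (Set.Ioo_subset_Icc_self hx)).differentiableAt.differentiableWithinAt)
    (.of_forall fun x hx ↦ by
      rw [(hderiv x (Set.Ioo_subset_Icc_self hx)).deriv]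
      exact hbound x (Set.Ioo_subset_Icc_self hx))
    (intervalIntegrable_const.add hint)
  rw [intervalIntegral.integral_add intervalIntegrable_const hint, norm_sub_rev] at h
  norm_num [smoothstep] at h
  exact h

theorem norm_le_add_integral_of_wronskian (haX : a ≤ X)
    (hv : ∀ x ∈ Set.Icc a (X + 1), HasDerivAt v (w x) x)
    (hw : ∀ x ∈ Set.Icc a (X + 1), HasDerivAt w (-(q x * v x) + ε x) x)
    (hy : ∀ x, HasDerivAt y (z x) x) (hz : ∀ x, HasDerivAt z (-q x * y x) x) (hya : y a = 0)
    (hza : z a = 1) (hε : ∀ x ∈ Set.Icc a (X + 1), ‖y x * ε x‖ ≤ P) :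
    ‖v a‖ ≤ P * (X + 1 - a) + ∫ x in X..(X + 1), (6 * |y x| + 3 * |z x|) * ‖v x‖ := by
  have hleft : Set.Icc a X ⊆ Set.Icc a (X + 1) := Set.Icc_subset_Icc_right (by linarith)
  have hright : Set.Icc X (X + 1) ⊆ Set.Icc a (X + 1) := Set.Icc_subset_Icc_left haX
  have h₁ := norm_wronskian_sub_le (fun x hx ↦ hv x (hleft hx)) (fun x hx ↦ hw x (hleft hx)) hy hz
    hya hza haX fun x hx ↦ hε x (hleft hx)
  have h₂ := norm_wronskian_le_add_integral (fun x hx ↦ hv x (hright hx))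
    (fun x hx ↦ hw x (hright hx)) hy hz fun x hx ↦ hε x (hright hx)
  have h₃ := norm_le_norm_add_norm_sub (z X * v X - y X * w X) (v a)
  linarith

end Wronskian

section Jensen

variable {α β : Type*} [MeasurableSpace α] [MeasurableSpace β] {μ : Measure α} {ν : Measure β}

theorem sq_integral_le [IsProbabilityMeasure ν] {g : β → ℝ} (hg : MemLp g 2 ν) :
    (∫ b, g b ∂ν) ^ 2 ≤ ∫ b, g b ^ 2 ∂ν :=
  even_two.convexOn_pow.map_integral_le (continuous_pow 2).continuousOn isClosed_univ
    (.of_forall fun _ ↦ Set.mem_univ _) (hg.integrable one_le_two) hg.integrable_sq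

theorem integral_sq_le_of_le_add_integral [IsFiniteMeasure μ] [IsProbabilityMeasure ν]
    {f : α → ℝ} {h : α × β → ℝ} {P τ : ℝ} (hf : 0 ≤ᵐ[μ] f) (hh : MemLp h 2 (μ.prod ν))
    (hfh : ∀ᵐ a ∂μ, f a ≤ P + ∫ b, h (a, b) ∂ν) (hτ : ∀ᵐ b ∂ν, ∫ a, h (a, b) ^ 2 ∂μ ≤ τ) :
    ∫ a, f a ^ 2 ∂μ ≤ 2 * μ.real Set.univ * P ^ 2 + 2 * τ := by
  have hsq : Integrable (fun p ↦ h p ^ 2) (μ.prod ν) := hh.integrable_sq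
  have hpt : ∀ᵐ a ∂μ, f a ^ 2 ≤ 2 * P ^ 2 + 2 * ∫ b, h (a, b) ^ 2 ∂ν := by
    filter_upwards [hf, hfh, hh.1.prodMk_left, hsq.prod_right_ae] with a ha₀ ha hmeas hint
    calc f a ^ 2 ≤ (P + ∫ b, h (a, b) ∂ν) ^ 2 := pow_le_pow_left₀ ha₀ ha 2
      _ ≤ 2 * (P ^ 2 + (∫ b, h (a, b) ∂ν) ^ 2) := add_sq_le
      _ ≤ _ := by linarith [sq_integral_le ((memLp_two_iff_integrable_sq hmeas).2 hint)]
  have hint : Integrable (fun a ↦ 2 * ∫ b, h (a, b) ^ 2 ∂ν) μ := hsq.integral_prod_left.const_mul 2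
  calc ∫ a, f a ^ 2 ∂μ ≤ ∫ a, (2 * P ^ 2 + 2 * ∫ b, h (a, b) ^ 2 ∂ν) ∂μ :=
        integral_mono_of_nonneg (.of_forall fun _ ↦ sq_nonneg _) ((integrable_const _).add hint) hpt
    _ = 2 * μ.real Set.univ * P ^ 2 + 2 * ∫ b, ∫ a, h (a, b) ^ 2 ∂μ ∂ν := by
        rw [integral_add (integrable_const _) hint, integral_const, integral_const_mul,
          integral_integral_swap hsq, smul_eq_mul]
        ring
    _ ≤ 2 * μ.real Set.univ * P ^ 2 + 2 * τ := by
        gcongr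
        simpa using integral_mono_ae hsq.integral_prod_right (integrable_const τ) hτ

end Jensen

section HalfPlane

/-- The Airy variable of the frequency `k` at height `x`: the partial Fourier transform of a
solution satisfies `v'' = -airyPhase E k x * v`. -/
noncomputable def airyPhase (E k x : ℝ) : ℝ := E + x - (2 * Real.pi * k) ^ 2

theorem continuous_airyPhase_prodMk (E a : ℝ) :
    Continuous fun p : ℝ × ℝ ↦ (airyPhase E p.1 a, airyPhase E p.1 p.2) := by
  unfold airyPhase
  fun_prop

theorem hasDerivAt_airyPhase (E k x : ℝ) : HasDerivAt (airyPhase E k) 1 x :=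
  ((hasDerivAt_id x).const_add E).sub_const _

/-- The coefficient with which `‖cutoffFourier χ u k x‖` enters the localised Wronskian identity
started at height `a`. -/
noncomputable def airyWeight (Y Z : ℝ → ℝ → ℝ) (E a k x : ℝ) : ℝ :=
  6 * |Y (airyPhase E k a) (airyPhase E k x)| + 3 * |Z (airyPhase E k a) (airyPhase E k x)|

variable {Y Z : ℝ → ℝ → ℝ} {E M a : ℝ} {u : ℝ × ℝ → ℂ} {K : Set ℝ}

theorem IsAiryPropagator.continuous_airyWeight (h : IsAiryPropagator Y Z) (E a : ℝ) :
    Continuous fun p : ℝ × ℝ ↦ airyWeight Y Z E a p.1 p.2 := by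
  have hY := h.continuous_fst.comp (continuous_airyPhase_prodMk E a)
  have hZ := h.continuous_snd.comp (continuous_airyPhase_prodMk E a)
  exact (hY.abs.const_mul 6).add (hZ.abs.const_mul 3)

theorem IsAiryPropagator.exists_sq_airyWeight_le (h : IsAiryPropagator Y Z) (E a : ℝ)
    (hK : IsCompact K) :
    ∃ C X₀, 0 ≤ C ∧ ∀ k ∈ K, ∀ x, X₀ ≤ x → airyWeight Y Z E a k x ^ 2 ≤ C * √(E + x) := by
  have hphase : Continuous fun k ↦ airyPhase E k a := by unfold airyPhase; fun_prop
  obtain ⟨C, hC, hYZ⟩ := h.exists_sq_add_sq_le (hK.image hphase)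
  obtain ⟨R, hR⟩ := hK.bddAbove_image
    (by fun_prop : Continuous fun k : ℝ ↦ (2 * Real.pi * k) ^ 2).continuousOn
  refine ⟨45 * C, 1 - E + R, by positivity, fun k hk x hx ↦ ?_⟩
  have hkR : (2 * Real.pi * k) ^ 2 ≤ R := hR (Set.mem_image_of_mem _ hk)
  have hle := hYZ _ (Set.mem_image_of_mem _ hk) (airyPhase E k x)
    (by unfold airyPhase; linarith)
  have hsqrt : √(airyPhase E k x) ≤ √(E + x) :=
    Real.sqrt_le_sqrt (sub_le_self _ (sq_nonneg _))
  set y := Y (airyPhase E k a) (airyPhase E k x)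
  set z := Z (airyPhase E k a) (airyPhase E k x)
  calc airyWeight Y Z E a k x ^ 2 = (6 * |y| + 3 * |z|) ^ 2 := rfl
    _ ≤ 45 * (|y| ^ 2 + |z| ^ 2) := by nlinarith [sq_nonneg (|y| - 2 * |z|)]
    _ = 45 * (y ^ 2 + z ^ 2) := by rw [sq_abs, sq_abs]
    _ ≤ 45 * (C * √(E + x)) := by gcongr; exact hle.trans (by gcongr)
    _ = 45 * C * √(E + x) := by ring

theorem IsAiryPropagator.norm_cutoffFourier_le_add_integral (h : IsAiryPropagator Y Z)
    (hu : ContDiffOn ℝ 2 u (Set.univ ×ˢ Set.Ioi M))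
    (hpde : ∀ p ∈ Set.univ ×ˢ Set.Ioi M, GravityHelmholtzAt E u p) (ha : M < a) {χ : ℝ → ℝ}
    (hχ : ContDiff ℝ 2 χ) (hχs : HasCompactSupport χ) {X P k : ℝ} (haX : a ≤ X)
    (hP : ∀ x ∈ Set.Icc a (X + 1),
      ‖Y (airyPhase E k a) (airyPhase E k x) * cutoffError χ u k x‖ ≤ P) :
    ‖cutoffFourier χ u k a‖ ≤ P * (X + 1 - a)
      + ∫ x in X..(X + 1), airyWeight Y Z E a k x * ‖cutoffFourier χ u k x‖ := by
  have hmem {x : ℝ} (hx : x ∈ Set.Icc a (X + 1)) : x ∈ Set.Ioi M := ha.trans_le hx.1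
  have hairy := h.isAirySolution (airyPhase E k a)
  refine norm_le_add_integral_of_wronskian (q := airyPhase E k) haX
    (fun x hx ↦ hasDerivAt_cutoffFourier isOpen_Ioi hχ.continuous hχs
      (hu.of_le one_le_two) k (hmem hx))
    (fun x hx ↦ hasDerivAt_cutoffFourier_pd2 isOpen_Ioi hχ hχs hu hpde k (hmem hx))
    (fun x ↦ ?_) (fun x ↦ ?_) (h.fst_self _) (h.snd_self _) hP
  · exact ((hairy.hasDerivAt_fst _).comp x (hasDerivAt_airyPhase E k x)).congr_deriv (mul_one _)
  · exact ((hairy.hasDerivAt_snd _).comp x (hasDerivAt_airyPhase E k x)).congr_deriv (mul_one _)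

theorem setIntegral_sq_airyWeight_mul_le {χ : ℝ → ℝ} (hχ : Continuous χ)
    (hχs : HasCompactSupport χ) (hχ₁ : ∀ t, |χ t| ≤ 1) {x C τ : ℝ}
    (hu : Continuous fun t ↦ u (t, x)) (hu₂ : MemLp (fun t ↦ u (t, x)) 2)
    (hK : MeasurableSet K) (hC : 0 ≤ C)
    (hweight : ∀ k ∈ K, airyWeight Y Z E a k x ^ 2 ≤ C * √(E + x))
    (hτ : √(E + x) * ∫ t, ‖u (t, x)‖ ^ 2 ≤ τ) :
    ∫ k in K, (airyWeight Y Z E a k x * ‖cutoffFourier χ u k x‖) ^ 2 ≤ C * τ := by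
  have hint : Integrable fun k ↦ ‖cutoffFourier χ u k x‖ ^ 2 :=
    (memLp_two_fourier (integrable_smul_slice hχ hχs hu)
      (memLp_two_smul_of_abs_le_one hχ hχ₁ hu₂)).integrable_norm_pow two_ne_zero
  calc _ ≤ ∫ k in K, C * √(E + x) * ‖cutoffFourier χ u k x‖ ^ 2 := by
        refine integral_mono_of_nonneg (.of_forall fun _ ↦ sq_nonneg _)
          (hint.const_mul _).integrableOn (ae_restrict_of_forall_mem hK fun k hk ↦ ?_)
        simp only [mul_pow]
        gcongr
        exact hweight k hk
    _ = C * (√(E + x) * ∫ k in K, ‖cutoffFourier χ u k x‖ ^ 2) := by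
        rw [integral_const_mul, mul_assoc]
    _ ≤ C * (√(E + x) * ∫ t, ‖u (t, x)‖ ^ 2) := by
        gcongr
        exact setIntegral_sq_norm_cutoffFourier_le hχ hχs hχ₁ hu hu₂ K
    _ ≤ C * τ := by gcongr

theorem IsAiryPropagator.setIntegral_sq_norm_cutoffFourier_le (h : IsAiryPropagator Y Z)
    (hu : ContDiffOn ℝ 2 u (Set.univ ×ˢ Set.Ioi M))
    (hpde : ∀ p ∈ Set.univ ×ˢ Set.Ioi M, GravityHelmholtzAt E u p) (ha : M < a)
    (hK : IsCompact K) {χ : ℝ → ℝ} (hχ : ContDiff ℝ 2 χ) (hχs : HasCompactSupport χ)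
    (hχ₁ : ∀ t, |χ t| ≤ 1) {X P C τ : ℝ} (haX : a ≤ X)
    (hP : ∀ k ∈ K, ∀ x ∈ Set.Icc a (X + 1),
      ‖Y (airyPhase E k a) (airyPhase E k x) * cutoffError χ u k x‖ ≤ P)
    (hC : 0 ≤ C) (hweight : ∀ k ∈ K, ∀ x, X ≤ x → airyWeight Y Z E a k x ^ 2 ≤ C * √(E + x))
    (hτ : ∀ x ∈ Set.Icc X (X + 1),
      MemLp (fun t ↦ u (t, x)) 2 ∧ √(E + x) * ∫ t, ‖u (t, x)‖ ^ 2 ≤ τ) :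
    ∫ k in K, ‖cutoffFourier χ u k a‖ ^ 2
      ≤ 2 * volume.real K * (P * (X + 1 - a)) ^ 2 + 2 * (C * τ) := by
  have : IsFiniteMeasure (volume.restrict K) := ⟨by simpa using hK.measure_lt_top⟩
  have : IsProbabilityMeasure (volume.restrict (Set.Icc X (X + 1))) := ⟨by simp⟩
  have hmem {x : ℝ} (hx : x ∈ Set.Icc X (X + 1)) : x ∈ Set.Ioi M := ha.trans_le (haX.trans hx.1)
  have hcont : ContinuousOn (fun p : ℝ × ℝ ↦ airyWeight Y Z E a p.1 p.2 *
      ‖cutoffFourier χ u p.1 p.2‖) (K ×ˢ Set.Icc X (X + 1)) :=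
    (h.continuous_airyWeight E a).continuousOn.mul
      ((continuousOn_cutoffFourier hχ.continuous hχs hu.continuousOn).mono
        (Set.prod_mono (Set.subset_univ K) fun x hx ↦ hmem hx)).norm
  have hL2 : MemLp (fun p : ℝ × ℝ ↦ airyWeight Y Z E a p.1 p.2 * ‖cutoffFourier χ u p.1 p.2‖) 2
      ((volume.restrict K).prod (volume.restrict (Set.Icc X (X + 1)))) := by
    have hcompact : IsCompact (K ×ˢ Set.Icc X (X + 1)) := hK.prod isCompact_Icc
    rw [Measure.prod_restrict]
    exact (memLp_two_iff_integrable_sq (hcont.aestronglyMeasurable hcompact.measurableSet)).2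
      ((hcont.pow 2).integrableOn_compact hcompact)
  have hslice (x : ℝ) (hx : x ∈ Set.Icc X (X + 1)) :
      ∫ k in K, (airyWeight Y Z E a k x * ‖cutoffFourier χ u k x‖) ^ 2 ≤ C * τ :=
    setIntegral_sq_airyWeight_mul_le hχ.continuous hχs hχ₁
      (hu.continuousOn.comp_continuous (by fun_prop) fun _ ↦ ⟨trivial, hmem hx⟩) (hτ x hx).1
      hK.measurableSet hC (fun k hk ↦ hweight k hk x hx.1) (hτ x hx).2
  simpa only [measureReal_restrict_apply_univ] using integral_sq_le_of_le_add_integral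
    (.of_forall fun k ↦ norm_nonneg (cutoffFourier χ u k a)) hL2
    (ae_restrict_of_forall_mem hK.measurableSet fun k hk ↦ by
      simpa only [intervalIntegral.integral_of_le (by linarith : X ≤ X + 1),
        integral_Icc_eq_integral_Ioc] using
        h.norm_cutoffFourier_le_add_integral hu hpde ha hχ hχs haX (hP k hk))
    (ae_restrict_of_forall_mem measurableSet_Icc hslice)

theorem exists_tendsto_norm_cutoffError_le (u : ℝ × ℝ → ℂ) (hK : IsCompact K) :
    ∃ δ : ℕ → ℝ, Tendsto δ atTop (𝓝 0) ∧ ∀ n, ∀ k ∈ K, ∀ x, MemLp (fun t ↦ u (t, x)) 2 →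
      ∫ t, ‖u (t, x)‖ ^ 2 ≤ 1 → ‖cutoffError (cutoff n) u k x‖ ≤ δ n := by
  obtain ⟨R, hR⟩ := hK.isBounded.exists_norm_le
  have h₁ := (tendsto_integral_sq_iteratedDeriv_cutoff one_ne_zero).sqrt
  have h₂ := (tendsto_integral_sq_iteratedDeriv_cutoff two_ne_zero).sqrt
  simp only [iteratedDeriv_succ, iteratedDeriv_zero, Real.sqrt_zero] at h₁ h₂
  have hmem {χ : ℝ → ℝ} (hχ : Continuous χ) (hχs : HasCompactSupport χ) : MemLp χ 2 :=
    hχ.memLp_of_hasCompactSupport hχs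
  refine ⟨_, by simpa using (h₁.const_mul (4 * Real.pi * R)).add h₂,
    fun n k hk x hu hu₁ ↦ ?_⟩
  have hχ : ContDiff ℝ 2 (cutoff n) := contDiff_cutoff n (m := 2)
  have hχs := hasCompactSupport_cutoff n
  calc ‖cutoffError (cutoff n) u k x‖
      ≤ (4 * Real.pi * |k| * √(∫ t, deriv (cutoff n) t ^ 2)
        + √(∫ t, deriv (deriv (cutoff n)) t ^ 2)) * √(∫ t, ‖u (t, x)‖ ^ 2) :=
        norm_cutoffError_le (hmem (hχ.continuous_deriv one_le_two) hχs.deriv)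
          (hmem (hχ.deriv'.continuous_deriv le_rfl) hχs.deriv.deriv) hu k
    _ ≤ (4 * Real.pi * |k| * √(∫ t, deriv (cutoff n) t ^ 2)
        + √(∫ t, deriv (deriv (cutoff n)) t ^ 2)) * 1 := by
        gcongr
        exact Real.sqrt_le_one.2 hu₁
    _ ≤ _ := by
        rw [mul_one]
        gcongr
        exact hR k hk

theorem tendsto_setIntegral_sq_norm_cutoffFourier
    (hu : ContDiffOn ℝ 2 u (Set.univ ×ˢ Set.Ioi M))
    (hpde : ∀ p ∈ Set.univ ×ˢ Set.Ioi M, GravityHelmholtzAt E u p) (ha : M < a)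
    (hL2 : ∀ x, a ≤ x → MemLp (fun t ↦ u (t, x)) 2)
    (hone : ∀ x, a ≤ x → ∫ t, ‖u (t, x)‖ ^ 2 ≤ 1)
    (hlim : Tendsto (fun x ↦ √(E + x) * ∫ t, ‖u (t, x)‖ ^ 2) atTop (𝓝 0)) (hK : IsCompact K) :
    Tendsto (fun n ↦ ∫ k in K, ‖cutoffFourier (cutoff n) u k a‖ ^ 2) atTop (𝓝 0) := by
  obtain ⟨Y, Z, h⟩ := exists_isAiryPropagator
  obtain ⟨C, X₀, hC, hweight⟩ := h.exists_sq_airyWeight_le E a hK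
  obtain ⟨δ, hδ, hδn⟩ := exists_tendsto_norm_cutoffError_le u hK
  refine tendsto_order.2 ⟨fun c hc ↦ .of_forall fun n ↦
    hc.trans_le (integral_nonneg fun _ ↦ sq_nonneg _), fun η hη ↦ ?_⟩
  obtain ⟨τ, hτ₀, hτη⟩ : ∃ τ > 0, 2 * (C * τ) < η :=
    ⟨η / (2 * C + 1), by positivity, by
      rw [← mul_assoc, mul_div_assoc', div_lt_iff₀ (by positivity)]; nlinarith⟩
  obtain ⟨X₁, hX₁⟩ := eventually_atTop.1 (hlim.eventually_le_const hτ₀)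
  obtain ⟨X, haX, hX₀, hX₁X⟩ : ∃ X, a ≤ X ∧ X₀ ≤ X ∧ X₁ ≤ X :=
    ⟨max a (max X₀ X₁), by simp, by simp, by simp⟩
  obtain ⟨b, hb⟩ := (hK.prod (isCompact_Icc (a := a) (b := X + 1))).exists_bound_of_continuousOn
    (h.continuous_fst.comp (continuous_airyPhase_prodMk E a)).continuousOn
  have hP (n : ℕ) (k : ℝ) (hk : k ∈ K) (x : ℝ) (hx : x ∈ Set.Icc a (X + 1)) :
      ‖Y (airyPhase E k a) (airyPhase E k x) * cutoffError (cutoff n) u k x‖ ≤ b * δ n := by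
    have hbk := hb (k, x) ⟨hk, hx⟩
    rw [norm_mul, Complex.norm_real]
    exact mul_le_mul hbk (hδn n k hk x (hL2 x hx.1) (hone x hx.1)) (norm_nonneg _)
      ((norm_nonneg _).trans hbk)
  have hbound (n : ℕ) := h.setIntegral_sq_norm_cutoffFourier_le hu hpde ha hK
    (contDiff_cutoff n (m := 2)) (hasCompactSupport_cutoff n) (abs_cutoff_le_one n) haX (hP n) hC
    (fun k hk x hx ↦ hweight k hk x (hX₀.trans hx))
    (fun x hx ↦ ⟨hL2 x (haX.trans hx.1), hX₁ x (hX₁X.trans hx.1)⟩)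
  have hbound_lim : Tendsto (fun n ↦ 2 * volume.real K * (b * δ n * (X + 1 - a)) ^ 2 + 2 * (C * τ))
      atTop (𝓝 (2 * (C * τ))) := by
    simpa using ((((hδ.const_mul b).mul_const (X + 1 - a)).pow 2).const_mul
      (2 * volume.real K)).add_const (2 * (C * τ))
  filter_upwards [hbound_lim.eventually_lt_const hτη] with n hn using (hbound n).trans_lt hn

theorem eq_zero_on_horizontal_line (hu : ContDiffOn ℝ 2 u (Set.univ ×ˢ Set.Ioi M))
    (hpde : ∀ p ∈ Set.univ ×ˢ Set.Ioi M, GravityHelmholtzAt E u p) (ha : M < a)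
    (hL2 : ∀ x, a ≤ x → MemLp (fun t ↦ u (t, x)) 2)
    (hone : ∀ x, a ≤ x → ∫ t, ‖u (t, x)‖ ^ 2 ≤ 1)
    (hlim : Tendsto (fun x ↦ √(E + x) * ∫ t, ‖u (t, x)‖ ^ 2) atTop (𝓝 0)) (t : ℝ) :
    u (t, a) = 0 := by
  have hcont : Continuous fun t ↦ u (t, a) :=
    hu.continuousOn.comp_continuous (by fun_prop) fun _ ↦ ⟨trivial, ha⟩
  have hχ (n : ℕ) : Continuous (cutoff n) := (contDiff_cutoff n (m := 0)).continuous
  have hint (n : ℕ) := integrable_smul_slice (hχ n) (hasCompactSupport_cutoff n) hcont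
  have hmem (n : ℕ) := memLp_two_smul_of_abs_le_one (hχ n) (abs_cutoff_le_one n) (hL2 a le_rfl)
  have hae : (fun t ↦ u (t, a)) =ᵐ[volume] 0 := by
    refine ae_eq_zero_of_tendsto_eLpNorm_fourier (hL2 a le_rfl) hint hmem
      (tendsto_eLpNorm_cutoff_smul_sub (hL2 a le_rfl)) fun K hK ↦ ?_
    simp only [eLpNorm_two_eq_ofReal_sqrt ((memLp_two_fourier (hint _) (hmem _)).restrict K)]
    simpa only [cutoffFourier, Real.sqrt_zero, ENNReal.ofReal_zero] using ENNReal.tendsto_ofReal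
      (tendsto_setIntegral_sq_norm_cutoffFourier hu hpde ha hL2 hone hlim hK).sqrt
  exact congrFun ((Continuous.ae_eq_iff_eq volume hcont continuous_zero).1 hae) t

theorem exists_eq_zero_of_lt_snd (hu : ContDiffOn ℝ 2 u (Set.univ ×ˢ Set.Ioi M))
    (hpde : ∀ p ∈ Set.univ ×ˢ Set.Ioi M, GravityHelmholtzAt E u p)
    (hint : ∀ᶠ x in atTop, Integrable fun t ↦ ‖u (t, x)‖ ^ 2)
    (hlim : Tendsto (fun x ↦ √(E + x) * ∫ t, ‖u (t, x)‖ ^ 2) atTop (𝓝 0)) :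
    ∃ a, ∀ p : ℝ × ℝ, a < p.2 → u p = 0 := by
  have hone : ∀ᶠ x in atTop, ∫ t, ‖u (t, x)‖ ^ 2 ≤ 1 := by
    filter_upwards [hlim.eventually_le_const one_pos, eventually_ge_atTop (1 - E)] with x hx hxE
    exact (le_mul_of_one_le_left (integral_nonneg fun _ ↦ sq_nonneg _)
      (Real.one_le_sqrt.2 (by linarith))).trans hx
  obtain ⟨a, ha⟩ := eventually_atTop.1 (hone.and (hint.and (eventually_gt_atTop M)))
  have hL2 (x : ℝ) (hx : a ≤ x) : MemLp (fun t ↦ u (t, x)) 2 :=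
    (memLp_two_iff_integrable_sq_norm (hu.continuousOn.comp_continuous (by fun_prop)
      fun _ ↦ ⟨trivial, (ha x hx).2.2⟩ : Continuous fun t ↦ u (t, x)).aestronglyMeasurable).2
      (ha x hx).2.1
  exact ⟨a, fun p hp ↦ eq_zero_on_horizontal_line hu hpde (ha p.2 hp.le).2.2
    (fun x hx ↦ hL2 x (hp.le.trans hx)) (fun x hx ↦ (ha x (hp.le.trans hx)).1) hlim p.1⟩

end HalfPlane

section IntegrationByParts

variable {V : Type*} [NormedAddCommGroup V] [NormedSpace ℝ V] [FiniteDimensional ℝ V]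
  [MeasurableSpace V] [BorelSpace V] {μ : Measure V} [μ.IsAddHaarMeasure]

theorem integral_comp_add_mul_fderiv {f g : V → ℝ} (hf : ContDiff ℝ 1 f) (hg : ContDiff ℝ 1 g)
    (hfs : HasCompactSupport f) (v w : V) :
    ∫ x, g (x + w) * fderiv ℝ f x v ∂μ = -∫ x, f (x - w) * fderiv ℝ g x v ∂μ := by
  have hgw : ContDiff ℝ 1 fun x ↦ g (x + w) := hg.comp (contDiff_id.add contDiff_const)
  have hf' := (hf.continuous_fderiv one_ne_zero).clm_apply (continuous_const (y := v))
  have hgw' := (hgw.continuous_fderiv one_ne_zero).clm_apply (continuous_const (y := v))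
  calc
    _ = -∫ x, fderiv ℝ (fun y ↦ g (y + w)) x v * f x ∂μ :=
        integral_mul_fderiv_eq_neg_fderiv_mul_of_integrable
          ((hgw'.mul hf.continuous).integrable_of_hasCompactSupport hfs.mul_left)
          ((hgw.continuous.mul hf').integrable_of_hasCompactSupport (hfs.fderiv_apply ℝ v).mul_left)
          ((hgw.continuous.mul hf.continuous).integrable_of_hasCompactSupport hfs.mul_left)
          (fun x _ ↦ hgw.differentiable one_ne_zero x) fun x _ ↦ hf.differentiable one_ne_zero x
    _ = -∫ x, f (x - w) * fderiv ℝ g x v ∂μ := by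
        rw [← integral_add_right_eq_self (fun x ↦ f (x - w) * fderiv ℝ g x v) w]
        simp only [fderiv_comp_add_right, add_sub_cancel_right, mul_comm]

/-
Both sides are limits of integrals of difference quotients, since mixed second derivatives need not
exist.
-/
theorem integral_fderiv_mul_fderiv_comm {f g : V → ℝ} (hf : ContDiff ℝ 1 f) (hg : ContDiff ℝ 1 g)
    (hfs : HasCompactSupport f) (hgs : HasCompactSupport g) (v w : V) :
    ∫ x, fderiv ℝ g x w * fderiv ℝ f x v ∂μ = ∫ x, fderiv ℝ f x w * fderiv ℝ g x v ∂μ := by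
  have hf' : Continuous fun x ↦ fderiv ℝ f x v :=
    (hf.continuous_fderiv one_ne_zero).clm_apply continuous_const
  have hg' : Continuous fun x ↦ fderiv ℝ g x v :=
    (hg.continuous_fderiv one_ne_zero).clm_apply continuous_const
  have hif (w : V) : Integrable (fun x ↦ g (x + w) * fderiv ℝ f x v) μ :=
    ((hg.continuous.comp (continuous_add_const w)).mul hf').integrable_of_hasCompactSupport
      (hfs.fderiv_apply ℝ v).mul_left
  have hig (w : V) : Integrable (fun x ↦ f (x - w) * fderiv ℝ g x v) μ :=
    ((hf.continuous.comp (continuous_sub_right w)).mul hg').integrable_of_hasCompactSupport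
      (hgs.fderiv_apply ℝ v).mul_left
  have hquot (t : ℝ) : ∫ x, t⁻¹ • (g (x + t • w) - g x) * fderiv ℝ f x v ∂μ
      = -∫ x, t⁻¹ • (f (x + t • -w) - f x) * fderiv ℝ g x v ∂μ := by
    have h := integral_comp_add_mul_fderiv (μ := μ) hf hg hfs v
    have h₀ := h 0
    have hif₀ := hif 0
    have hig₀ := hig 0
    simp only [add_zero, sub_zero] at h₀ hif₀ hig₀
    simp only [smul_eq_mul, mul_assoc, integral_const_mul, sub_mul, smul_neg, ← sub_eq_add_neg]
    rw [integral_sub (hif _) hif₀, integral_sub (hig _) hig₀, h, h₀]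
    ring
  have hline {h : V → ℝ} (hh : ContDiff ℝ 1 h) (x u : V) : lineDeriv ℝ h x u = fderiv ℝ h x u :=
    (hh.differentiable one_ne_zero x).lineDeriv_eq_fderiv
  obtain ⟨C, hfL⟩ := hf.lipschitzWith_of_hasCompactSupport hfs one_ne_zero
  obtain ⟨D, hgL⟩ := hg.lipschitzWith_of_hasCompactSupport hgs one_ne_zero
  have hlimg := hgL.integral_inv_smul_sub_mul_tendsto_integral_lineDeriv_mul (μ := μ)
    (hf'.integrable_of_hasCompactSupport (hfs.fderiv_apply ℝ v)) w
  have hlimf := hfL.integral_inv_smul_sub_mul_tendsto_integral_lineDeriv_mul (μ := μ)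
    (hg'.integrable_of_hasCompactSupport (hgs.fderiv_apply ℝ v)) (-w)
  simp only [hquot, hline hg] at hlimg
  simp only [hline hf, map_neg, neg_mul, integral_neg] at hlimf
  simpa only [neg_neg] using tendsto_nhds_unique hlimg hlimf.neg

variable {F : Type*} [NormedAddCommGroup F] [InnerProductSpace ℝ F] {g : V → F} {ℓ : V →L[ℝ] ℝ}
  {v : V}

theorem integral_sq_norm_eq_neg_integral_sub_mul_inner (hg : ContDiff ℝ 1 g)
    (hgs : HasCompactSupport g) (hv : ℓ v = 1) (c : ℝ) :
    ∫ x, ‖g x‖ ^ 2 ∂μ = -∫ x, (ℓ x - c) * (2 * inner ℝ (g x) (fderiv ℝ g x v)) ∂μ := by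
  have hg' : Continuous fun x ↦ fderiv ℝ g x v :=
    (hg.continuous_fderiv one_ne_zero).clm_apply continuous_const
  have hgc := hg.continuous
  have hgs' : HasCompactSupport fun x ↦ ‖g x‖ ^ 2 := hgs.mono fun x hx h ↦ hx (by simp [h])
  have hℓ (x : V) : HasFDerivAt (fun y ↦ ℓ y - c) ℓ x := ℓ.hasFDerivAt.sub_const c
  have hsq (x : V) : fderiv ℝ (fun y ↦ ‖g y‖ ^ 2) x v = 2 * inner ℝ (g x) (fderiv ℝ g x v) := by
    rw [(hg.differentiable one_ne_zero x).hasFDerivAt.norm_sq.fderiv]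
    simp
  have hparts := integral_mul_fderiv_eq_neg_fderiv_mul_of_integrable (μ := μ) (v := v)
    (f := fun x ↦ ℓ x - c) (g := fun x ↦ ‖g x‖ ^ 2)
  simp only [fun x ↦ (hℓ x).fderiv, hv, one_mul, hsq] at hparts
  rw [hparts, neg_neg]
  · exact (hgc.norm.pow 2).integrable_of_hasCompactSupport hgs'
  · exact ((ℓ.continuous.sub continuous_const).mul (continuous_const.mul (hgc.inner hg')))
      |>.integrable_of_hasCompactSupport (hgs.mono fun x hx h ↦ hx (by simp [h]))
  · exact Continuous.integrable_of_hasCompactSupport (by fun_prop) hgs'.mul_left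
  · exact fun x _ ↦ (hℓ x).differentiableAt
  · exact fun x _ ↦ (hg.differentiable one_ne_zero x).norm_sq ℝ

theorem integral_sq_norm_le_integral_sq_norm_fderiv (hg : ContDiff ℝ 1 g)
    (hgs : HasCompactSupport g) (hv : ℓ v = 1) {c r : ℝ} (hr : ∀ x, g x ≠ 0 → |ℓ x - c| ≤ r) :
    ∫ x, ‖g x‖ ^ 2 ∂μ ≤ 4 * r ^ 2 * ∫ x, ‖fderiv ℝ g x v‖ ^ 2 ∂μ := by
  have hg' : Continuous fun x ↦ fderiv ℝ g x v :=
    (hg.continuous_fderiv one_ne_zero).clm_apply continuous_const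
  have hgc := hg.continuous
  have hi₀ : Integrable (fun x ↦ ‖g x‖ ^ 2) μ :=
    (hgc.memLp_of_hasCompactSupport hgs).integrable_norm_pow two_ne_zero
  have hi₁ : Integrable (fun x ↦ ‖fderiv ℝ g x v‖ ^ 2) μ :=
    (hg'.memLp_of_hasCompactSupport (hgs.fderiv_apply ℝ v)).integrable_norm_pow two_ne_zero
  have hi₂ : Integrable (fun x ↦ (ℓ x - c) * (2 * inner ℝ (g x) (fderiv ℝ g x v))) μ :=
    Continuous.integrable_of_hasCompactSupport (by fun_prop)
      (hgs.mono fun x hx h ↦ hx (by simp [h]))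
  have hpt (x : V) : -((ℓ x - c) * (2 * inner ℝ (g x) (fderiv ℝ g x v)))
      ≤ 1 / 2 * ‖g x‖ ^ 2 + 2 * r ^ 2 * ‖fderiv ℝ g x v‖ ^ 2 := by
    by_cases h : g x = 0
    · simpa [h] using by positivity
    calc
      _ ≤ |ℓ x - c| * (2 * |inner ℝ (g x) (fderiv ℝ g x v)|) := by
        rw [← abs_two, ← abs_mul, ← abs_mul, abs_two]
        exact neg_le_abs _
      _ ≤ r * (2 * (‖g x‖ * ‖fderiv ℝ g x v‖)) := by
        gcongr
        · exact (abs_nonneg _).trans (hr x h)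
        · exact hr x h
        · exact abs_real_inner_le_norm _ _
      _ ≤ _ := by linarith [sq_nonneg (‖g x‖ - 2 * r * ‖fderiv ℝ g x v‖)]
  have hle := integral_mono hi₂.neg ((hi₀.const_mul _).add (hi₁.const_mul _)) hpt
  simp only [Pi.neg_apply, Pi.add_apply] at hle
  rw [integral_neg, ← integral_sq_norm_eq_neg_integral_sub_mul_inner hg hgs hv,
    integral_add (hi₀.const_mul _) (hi₁.const_mul _), integral_const_mul, integral_const_mul] at hle
  linarith

end IntegrationByParts

section Carleman

variable {f g φ : ℝ × ℝ → ℂ} {p : ℝ × ℝ} {r σ : ℝ}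

/-- The first-order operator `∂₁ + σ i ∂₂`. For `σ = 1` and `σ = -1` these are twice the Wirtinger
derivatives `∂̄` and `∂`, whose composition is the Laplacian. -/
noncomputable def wirtinger (σ : ℝ) (f : ℝ × ℝ → ℂ) (p : ℝ × ℝ) : ℂ :=
  pd1 f p + σ * Complex.I * pd2 f p

/-- The Laplacian `∂₁² + ∂₂²` on the plane; Mathlib's `Laplacian` is not available on `ℝ × ℝ`,
which carries the sup norm. -/
noncomputable def planeLaplacian (f : ℝ × ℝ → ℂ) (p : ℝ × ℝ) : ℂ :=
  pd11 f p + pd22 f p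

theorem pd1_congr (h : f =ᶠ[𝓝 p] g) : pd1 f p = pd1 g p :=
  EventuallyEq.deriv_eq (h.comp_tendsto (Continuous.tendsto' (by fun_prop) p.1 p rfl))

theorem pd2_congr (h : f =ᶠ[𝓝 p] g) : pd2 f p = pd2 g p :=
  EventuallyEq.deriv_eq (h.comp_tendsto (Continuous.tendsto' (by fun_prop) p.2 p rfl))

theorem planeLaplacian_congr (h : f =ᶠ[𝓝 p] g) : planeLaplacian f p = planeLaplacian g p :=
  congrArg₂ (· + ·) (pd1_congr (h.eventuallyEq_nhds.mono fun _ ↦ pd1_congr))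
    (pd2_congr (h.eventuallyEq_nhds.mono fun _ ↦ pd2_congr))

theorem tsupport_pd1_subset : tsupport (pd1 f) ⊆ tsupport f :=
  closure_minimal (fun p hp ↦ by
    by_contra h
    exact hp ((pd1_congr (notMem_tsupport_iff_eventuallyEq.1 h)).trans (deriv_const p.1 0)))
    (isClosed_tsupport f)

theorem tsupport_pd2_subset : tsupport (pd2 f) ⊆ tsupport f :=
  closure_minimal (fun p hp ↦ by
    by_contra h
    exact hp ((pd2_congr (notMem_tsupport_iff_eventuallyEq.1 h)).trans (deriv_const p.2 0)))
    (isClosed_tsupport f)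

theorem tsupport_wirtinger_subset : tsupport (wirtinger σ f) ⊆ tsupport f :=
  (tsupport_add _ _).trans (Set.union_subset tsupport_pd1_subset
    (tsupport_mul_subset_right.trans tsupport_pd2_subset))

theorem contDiff_pd1 {m n : WithTop ℕ∞} (hf : ContDiff ℝ n f) (hmn : m + 1 ≤ n) :
    ContDiff ℝ m (pd1 f) :=
  contDiffOn_univ.1 (contDiffOn_pd1 isOpen_univ hf.contDiffOn hmn)

theorem contDiff_pd2 {m n : WithTop ℕ∞} (hf : ContDiff ℝ n f) (hmn : m + 1 ≤ n) :
    ContDiff ℝ m (pd2 f) :=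
  contDiffOn_univ.1 (contDiffOn_pd2 isOpen_univ hf.contDiffOn hmn)

theorem contDiff_wirtinger {m n : WithTop ℕ∞} (hf : ContDiff ℝ n f) (hmn : m + 1 ≤ n) :
    ContDiff ℝ m (wirtinger σ f) :=
  (contDiff_pd1 hf hmn).add (contDiff_const.mul (contDiff_pd2 hf hmn))

theorem pd2_pd1_comm (hφ : ContDiff ℝ 2 φ) (p : ℝ × ℝ) : pd2 (pd1 φ) p = pd1 (pd2 φ) p := by
  have hd : Differentiable ℝ φ := hφ.differentiable two_ne_zero
  have hd' : Differentiable ℝ (fderiv ℝ φ) :=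
    (hφ.fderiv_right (m := 1) (by norm_num)).differentiable one_ne_zero
  have hsecond (v w : ℝ × ℝ) :
      fderiv ℝ (fun x ↦ fderiv ℝ φ x v) p w = fderiv ℝ (fderiv ℝ φ) p w v := by
    rw [fderiv_clm_apply (hd' p) (differentiableAt_const v)]
    simp
  have h₁ : pd1 φ = fun x ↦ fderiv ℝ φ x (1, 0) := funext fun x ↦ pd1_eq_fderiv (hd x)
  have h₂ : pd2 φ = fun x ↦ fderiv ℝ φ x (0, 1) := funext fun x ↦ pd2_eq_fderiv (hd x)
  have hd₁ (v : ℝ × ℝ) : Differentiable ℝ fun x ↦ fderiv ℝ φ x v :=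
    hd'.clm_apply (differentiable_const v)
  rw [h₁, h₂, pd2_eq_fderiv (hd₁ _ p), pd1_eq_fderiv (hd₁ _ p), hsecond, hsecond]
  exact (hφ.contDiffAt.isSymmSndFDerivAt (by simp)).eq _ _

theorem wirtinger_neg_one_wirtinger_one (hφ : ContDiff ℝ 2 φ) :
    wirtinger (-1) (wirtinger 1 φ) = planeLaplacian φ := by
  funext p
  have h₁ : Differentiable ℝ (pd1 φ) := (contDiff_pd1 hφ (m := 1) (by norm_num)).differentiable
    one_ne_zero
  have h₂ : Differentiable ℝ (pd2 φ) := (contDiff_pd2 hφ (m := 1) (by norm_num)).differentiable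
    one_ne_zero
  have e₁ : pd1 (wirtinger 1 φ) p = pd11 φ p + (1 : ℝ) * Complex.I * pd1 (pd2 φ) p :=
    ((hasDerivAt_pd1 (h₁ p)).add ((hasDerivAt_pd1 (h₂ p)).const_mul _)).deriv
  have e₂ : pd2 (wirtinger 1 φ) p = pd2 (pd1 φ) p + (1 : ℝ) * Complex.I * pd22 φ p :=
    ((hasDerivAt_pd2 (h₁ p)).add ((hasDerivAt_pd2 (h₂ p)).const_mul _)).deriv
  rw [wirtinger, e₁, e₂, planeLaplacian, pd2_pd1_comm hφ]
  push_cast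
  linear_combination -pd22 φ p * Complex.I_sq

theorem sq_norm_add_mul_I (hσ : σ ^ 2 = 1) (z w : ℂ) :
    ‖z + σ * Complex.I * w‖ ^ 2 = ‖z‖ ^ 2 + ‖w‖ ^ 2 + 2 * σ * (w.re * z.im - w.im * z.re) := by
  simp only [← Complex.normSq_eq_norm_sq, Complex.normSq_apply, Complex.add_re, Complex.add_im,
    Complex.mul_re, Complex.mul_im, Complex.ofReal_re, Complex.ofReal_im, Complex.I_re,
    Complex.I_im]
  linear_combination (w.re ^ 2 + w.im ^ 2) * hσ

theorem integral_pd2_re_mul_pd1_im_comm (hg : ContDiff ℝ 1 g) (hgs : HasCompactSupport g) :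
    ∫ p, (pd2 g p).re * (pd1 g p).im = ∫ p, (pd2 g p).im * (pd1 g p).re := by
  have hd : Differentiable ℝ g := hg.differentiable one_ne_zero
  have hre (p v : ℝ × ℝ) : fderiv ℝ (fun x ↦ (g x).re) p v = (fderiv ℝ g p v).re :=
    congrArg (· v) (Complex.reCLM.hasFDerivAt.comp p (hd p).hasFDerivAt).fderiv
  have him (p v : ℝ × ℝ) : fderiv ℝ (fun x ↦ (g x).im) p v = (fderiv ℝ g p v).im :=
    congrArg (· v) (Complex.imCLM.hasFDerivAt.comp p (hd p).hasFDerivAt).fderiv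
  simpa only [hre, him, ← pd1_eq_fderiv (hd _), ← pd2_eq_fderiv (hd _)] using
    integral_fderiv_mul_fderiv_comm (μ := volume) (f := fun x ↦ (g x).im)
      (g := fun x ↦ (g x).re) (Complex.imCLM.contDiff.comp hg) (Complex.reCLM.contDiff.comp hg)
      (hgs.comp_left (g := Complex.im) rfl) (hgs.comp_left (g := Complex.re) rfl) (1, 0) (0, 1)

theorem integral_sq_norm_wirtinger (hσ : σ ^ 2 = 1) (hg : ContDiff ℝ 1 g)
    (hgs : HasCompactSupport g) :
    ∫ p, ‖wirtinger σ g p‖ ^ 2 = (∫ p, ‖pd1 g p‖ ^ 2) + ∫ p, ‖pd2 g p‖ ^ 2 := by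
  have hc₁ : Continuous (pd1 g) := (contDiff_pd1 hg (m := 0) (by norm_num)).continuous
  have hc₂ : Continuous (pd2 g) := (contDiff_pd2 hg (m := 0) (by norm_num)).continuous
  have hs₁ : HasCompactSupport (pd1 g) :=
    hgs.of_isClosed_subset (isClosed_tsupport _) tsupport_pd1_subset
  have hs₂ : HasCompactSupport (pd2 g) :=
    hgs.of_isClosed_subset (isClosed_tsupport _) tsupport_pd2_subset
  have hi₁ : Integrable fun p ↦ ‖pd1 g p‖ ^ 2 :=
    (hc₁.memLp_of_hasCompactSupport hs₁).integrable_norm_pow two_ne_zero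
  have hi₂ : Integrable fun p ↦ ‖pd2 g p‖ ^ 2 :=
    (hc₂.memLp_of_hasCompactSupport hs₂).integrable_norm_pow two_ne_zero
  have hi₃ : Integrable fun p ↦ (pd2 g p).re * (pd1 g p).im :=
    ((Complex.continuous_re.comp hc₂).mul (Complex.continuous_im.comp hc₁))
      |>.integrable_of_hasCompactSupport (hs₁.comp_left (g := Complex.im) rfl).mul_left
  have hi₄ : Integrable fun p ↦ (pd2 g p).im * (pd1 g p).re :=
    ((Complex.continuous_im.comp hc₂).mul (Complex.continuous_re.comp hc₁))
      |>.integrable_of_hasCompactSupport (hs₁.comp_left (g := Complex.re) rfl).mul_left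
  have hcross : Integrable fun p ↦ 2 * σ * ((pd2 g p).re * (pd1 g p).im
      - (pd2 g p).im * (pd1 g p).re) := (hi₃.sub hi₄).const_mul _
  simp only [wirtinger, sq_norm_add_mul_I hσ]
  rw [integral_add (hi₁.fun_add hi₂) hcross, integral_add hi₁ hi₂,
    integral_const_mul, integral_sub hi₃ hi₄, integral_pd2_re_mul_pd1_im_comm hg hgs, sub_self,
    mul_zero, add_zero]

theorem integral_sq_norm_le_integral_sq_norm_wirtinger (hσ : σ ^ 2 = 1) (hg : ContDiff ℝ 1 g)
    (hgs : HasCompactSupport g) {c : ℝ} (hr : ∀ p, g p ≠ 0 → |p.1 - c| ≤ r) :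
    ∫ p, ‖g p‖ ^ 2 ≤ 4 * r ^ 2 * ∫ p, ‖wirtinger σ g p‖ ^ 2 := by
  rw [integral_sq_norm_wirtinger hσ hg hgs]
  calc
    _ ≤ 4 * r ^ 2 * ∫ p, ‖pd1 g p‖ ^ 2 := by
      simpa only [pd1_eq_fderiv (hg.differentiable one_ne_zero _)] using
        integral_sq_norm_le_integral_sq_norm_fderiv (ℓ := ContinuousLinearMap.fst ℝ ℝ ℝ)
          (v := (1, 0)) hg hgs rfl hr
    _ ≤ _ := by
      gcongr
      exact le_add_of_nonneg_right (integral_nonneg fun _ ↦ sq_nonneg _)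

end Carleman

section CarlemanWeights

variable {g φ : ℝ × ℝ → ℂ} {p q : ℝ × ℝ} {r σ : ℝ}

/-- The displacement `p - q` read as the complex number `(p - q).1 + σ i (p - q).2`, that is, as
`z` for `σ = 1` and as `z̄` for `σ = -1`. -/
noncomputable def complexOffset (σ : ℝ) (q p : ℝ × ℝ) : ℂ :=
  ((p.1 - q.1 : ℝ) : ℂ) + σ * Complex.I * ((p.2 - q.2 : ℝ) : ℂ)

/-- The squared Euclidean distance in the plane, as opposed to the sup distance of `ℝ × ℝ`. -/
def sqDist (q p : ℝ × ℝ) : ℝ :=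
  (p.1 - q.1) ^ 2 + (p.2 - q.2) ^ 2

theorem sqDist_nonneg (q p : ℝ × ℝ) : 0 ≤ sqDist q p :=
  add_nonneg (sq_nonneg _) (sq_nonneg _)

theorem continuous_sqDist (q : ℝ × ℝ) : Continuous (sqDist q) := by
  unfold sqDist
  fun_prop

theorem sqDist_le_two_mul_sq_dist (q p : ℝ × ℝ) : sqDist q p ≤ 2 * dist p q ^ 2 := by
  have h₁ : |p.1 - q.1| ^ 2 ≤ dist p q ^ 2 := pow_le_pow_left₀ (abs_nonneg _) (le_max_left _ _) 2
  have h₂ : |p.2 - q.2| ^ 2 ≤ dist p q ^ 2 := pow_le_pow_left₀ (abs_nonneg _) (le_max_right _ _) 2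
  rw [sq_abs] at h₁ h₂
  unfold sqDist
  linarith

theorem dist_sq_le_sqDist (q p : ℝ × ℝ) : dist p q ^ 2 ≤ sqDist q p := by
  rw [Prod.dist_eq, Real.dist_eq, Real.dist_eq, sqDist]
  rcases max_choice |p.1 - q.1| |p.2 - q.2| with h | h <;> rw [h, sq_abs]
  · exact le_add_of_nonneg_right (sq_nonneg _)
  · exact le_add_of_nonneg_left (sq_nonneg _)

theorem sqDist_eq_zero_iff : sqDist q p = 0 ↔ p = q := by
  refine ⟨fun h ↦ ?_, fun h ↦ by simp [h, sqDist]⟩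
  exact dist_eq_zero.1 (pow_eq_zero_iff two_ne_zero |>.1
    (le_antisymm (h ▸ dist_sq_le_sqDist q p) (sq_nonneg _)))

theorem sq_norm_complexOffset (hσ : σ ^ 2 = 1) (q p : ℝ × ℝ) :
    ‖complexOffset σ q p‖ ^ 2 = sqDist q p := by
  rw [complexOffset, sq_norm_add_mul_I hσ, Complex.norm_real, Complex.norm_real, Real.norm_eq_abs,
    Real.norm_eq_abs, sq_abs, sq_abs]
  simp [sqDist]

theorem complexOffset_ne_zero (hσ : σ ^ 2 = 1) (h : p ≠ q) : complexOffset σ q p ≠ 0 := by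
  rw [← norm_ne_zero_iff, ← pow_ne_zero_iff two_ne_zero, sq_norm_complexOffset hσ]
  exact sqDist_eq_zero_iff.not.2 h

theorem sq_norm_mul_inv_complexOffset_pow (hσ : σ ^ 2 = 1) (q p : ℝ × ℝ) (z : ℂ) (n : ℕ) :
    ‖z * (complexOffset σ q p)⁻¹ ^ n‖ ^ 2 = ‖z‖ ^ 2 * (sqDist q p)⁻¹ ^ n := by
  rw [norm_mul, norm_pow, norm_inv, mul_pow, pow_right_comm, inv_pow (‖_‖) 2,
    sq_norm_complexOffset hσ]

theorem contDiff_complexOffset {n : WithTop ℕ∞} (σ : ℝ) (q : ℝ × ℝ) :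
    ContDiff ℝ n (complexOffset σ q) :=
  (Complex.ofRealCLM.contDiff.comp (contDiff_fst.sub contDiff_const)).add
    (contDiff_const.mul (Complex.ofRealCLM.contDiff.comp (contDiff_snd.sub contDiff_const)))

/-
A holomorphic function of `complexOffset σ q` is annihilated by `∂₁ + σ i ∂₂`, hence acts as a
constant.
-/
theorem wirtinger_mul_comp_complexOffset {F : ℂ → ℂ} (hσ : σ ^ 2 = 1)
    (hg : DifferentiableAt ℝ g p) (hF : DifferentiableAt ℂ F (complexOffset σ q p)) :
    wirtinger σ (fun x ↦ g x * F (complexOffset σ q x)) p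
      = wirtinger σ g p * F (complexOffset σ q p) := by
  have hz₁ : HasDerivAt (fun t ↦ complexOffset σ q (t, p.2)) (1 : ℝ) p.1 :=
    ((hasDerivAt_id p.1).sub_const q.1).ofReal_comp.add_const (σ * Complex.I * (p.2 - q.2 : ℝ))
  have hz₂ : HasDerivAt (fun t ↦ complexOffset σ q (p.1, t)) (σ * Complex.I * (1 : ℝ)) p.2 :=
    (((hasDerivAt_id p.2).sub_const q.2).ofReal_comp.const_mul (σ * Complex.I)).const_add
      ((p.1 - q.1 : ℝ) : ℂ)
  have h₁ : pd1 (fun x ↦ g x * F (complexOffset σ q x)) p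
      = pd1 g p * F (complexOffset σ q p) + g p * (deriv F (complexOffset σ q p) * (1 : ℝ)) :=
    ((hasDerivAt_pd1 hg).mul (hF.hasDerivAt.comp p.1 hz₁)).deriv
  have h₂ : pd2 (fun x ↦ g x * F (complexOffset σ q x)) p = pd2 g p * F (complexOffset σ q p)
      + g p * (deriv F (complexOffset σ q p) * (σ * Complex.I * (1 : ℝ))) :=
    ((hasDerivAt_pd2 hg).mul (hF.hasDerivAt.comp p.2 hz₂)).deriv
  have hσ' : (σ : ℂ) ^ 2 = 1 := by exact_mod_cast hσ
  rw [wirtinger, wirtinger, h₁, h₂, Complex.ofReal_one]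
  linear_combination g p * deriv F (complexOffset σ q p) * (σ ^ 2 * Complex.I_sq - hσ')

theorem contDiff_mul_inv_complexOffset_pow {m : WithTop ℕ∞} (hσ : σ ^ 2 = 1) (hg : ContDiff ℝ m g)
    (hq : q ∉ tsupport g) (n : ℕ) :
    ContDiff ℝ m fun p ↦ g p * (complexOffset σ q p)⁻¹ ^ n := by
  refine contDiff_iff_contDiffAt.2 fun p ↦ ?_
  by_cases hp : p = q
  · refine contDiffAt_const.congr_of_eventuallyEq (f := fun _ ↦ 0) ?_
    filter_upwards [notMem_tsupport_iff_eventuallyEq.1 (hp ▸ hq)] with x hx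
    simp [hx]
  · exact hg.contDiffAt.mul
      (((contDiff_complexOffset σ q).contDiffAt.inv (complexOffset_ne_zero hσ hp)).pow n)

theorem wirtinger_mul_inv_complexOffset_pow (hσ : σ ^ 2 = 1) (hg : ContDiff ℝ 1 g)
    (hq : q ∉ tsupport g) (n : ℕ) (p : ℝ × ℝ) :
    wirtinger σ (fun x ↦ g x * (complexOffset σ q x)⁻¹ ^ n) p
      = wirtinger σ g p * (complexOffset σ q p)⁻¹ ^ n := by
  by_cases hp : p ∈ tsupport g
  · have hne : complexOffset σ q p ≠ 0 := complexOffset_ne_zero hσ fun h ↦ hq (h ▸ hp)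
    exact wirtinger_mul_comp_complexOffset (F := fun z ↦ z⁻¹ ^ n) hσ
      (hg.differentiable one_ne_zero p) ((differentiableAt_inv hne).pow n)
  · rw [image_eq_zero_of_notMem_tsupport fun h ↦ hp (tsupport_wirtinger_subset h), zero_mul]
    exact image_eq_zero_of_notMem_tsupport fun h ↦
      hp (tsupport_mul_subset_left (tsupport_wirtinger_subset h))

theorem integral_weighted_le_integral_weighted_wirtinger (hσ : σ ^ 2 = 1) (hg : ContDiff ℝ 1 g)
    (hgs : HasCompactSupport g) (hq : q ∉ tsupport g) (hr : ∀ p ∈ tsupport g, |p.1 - q.1| ≤ r)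
    (n : ℕ) :
    ∫ p, ‖g p‖ ^ 2 * (sqDist q p)⁻¹ ^ n
      ≤ 4 * r ^ 2 * ∫ p, ‖wirtinger σ g p‖ ^ 2 * (sqDist q p)⁻¹ ^ n := by
  simpa only [wirtinger_mul_inv_complexOffset_pow hσ hg hq,
    sq_norm_mul_inv_complexOffset_pow hσ] using
    integral_sq_norm_le_integral_sq_norm_wirtinger hσ
      (contDiff_mul_inv_complexOffset_pow hσ hg hq n) hgs.mul_right
      fun p hp ↦ hr p (subset_tsupport g (left_ne_zero_of_mul hp))

theorem tsupport_planeLaplacian_subset : tsupport (planeLaplacian φ) ⊆ tsupport φ :=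
  (tsupport_add _ _).trans (Set.union_subset (tsupport_pd1_subset.trans tsupport_pd1_subset)
    (tsupport_pd2_subset.trans tsupport_pd2_subset))

theorem carleman_estimate (hφ : ContDiff ℝ 2 φ) (hφs : HasCompactSupport φ) (hq : q ∉ tsupport φ)
    (hr : ∀ p ∈ tsupport φ, |p.1 - q.1| ≤ r) (n : ℕ) :
    ∫ p, ‖φ p‖ ^ 2 * (sqDist q p)⁻¹ ^ n
      ≤ 16 * r ^ 4 * ∫ p, ‖planeLaplacian φ p‖ ^ 2 * (sqDist q p)⁻¹ ^ n := by
  have hs := tsupport_wirtinger_subset (σ := 1) (f := φ)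
  calc
    _ ≤ 4 * r ^ 2 * ∫ p, ‖wirtinger 1 φ p‖ ^ 2 * (sqDist q p)⁻¹ ^ n :=
      integral_weighted_le_integral_weighted_wirtinger (one_pow 2) (hφ.of_le one_le_two) hφs hq hr n
    _ ≤ 4 * r ^ 2 * (4 * r ^ 2 * ∫ p, ‖wirtinger (-1) (wirtinger 1 φ) p‖ ^ 2
          * (sqDist q p)⁻¹ ^ n) := by
      gcongr
      exact integral_weighted_le_integral_weighted_wirtinger (by norm_num)
        (contDiff_wirtinger hφ (by norm_num)) (hφs.of_isClosed_subset (isClosed_tsupport _) hs)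
        (fun h ↦ hq (hs h)) (fun p hp ↦ hr p (hs hp)) n
    _ = _ := by
      rw [wirtinger_neg_one_wirtinger_one hφ]
      ring

end CarlemanWeights

section UniqueContinuation

theorem eq_zero_of_integral_mul_inv_pow_le {X : Type*} [TopologicalSpace X] [MeasurableSpace X]
    [OpensMeasurableSpace X] {μ : Measure X} [μ.IsOpenPosMeasure] {f ρ : X → ℝ}
    (hf : Continuous f) (hf₀ : ∀ x, 0 ≤ f x) (hρ : Continuous ρ) (hρ₀ : ∀ x, 0 ≤ ρ x)
    (hfρ : ∀ x, ρ x = 0 → f x = 0) (hint : ∀ n : ℕ, Integrable (fun x ↦ f x * (ρ x)⁻¹ ^ n) μ)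
    {C R : ℝ} (hle : ∀ n : ℕ, ∫ x, f x * (ρ x)⁻¹ ^ n ∂μ ≤ C * R⁻¹ ^ n) {x : X} (hx : ρ x < R) :
    f x = 0 := by
  obtain ⟨s, hxs, hsR⟩ := exists_between hx
  have hs₀ : 0 < s := (hρ₀ x).trans_lt hxs
  have hAo : IsOpen {y | ρ y < s} := isOpen_lt hρ continuous_const
  have hif : Integrable f μ := by simpa using hint 0
  have hpt (n : ℕ) (y : X) (hy : ρ y < s) : f y ≤ s ^ n * (f y * (ρ y)⁻¹ ^ n) := by
    rcases (hρ₀ y).eq_or_lt' with h | h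
    · simp [hfρ y h]
    · calc
        f y = f y * 1 := (mul_one _).symm
        _ ≤ f y * (s * (ρ y)⁻¹) ^ n := by
          gcongr
          · exact hf₀ y
          · exact one_le_pow₀ ((one_le_div h).2 hy.le)
        _ = _ := by ring
  have hbound (n : ℕ) : ∫ y in {y | ρ y < s}, f y ∂μ ≤ C * (s * R⁻¹) ^ n := by
    have hn := (hint n).const_mul (s ^ n)
    calc
      _ ≤ ∫ y in {y | ρ y < s}, s ^ n * (f y * (ρ y)⁻¹ ^ n) ∂μ :=
        setIntegral_mono_on hif.integrableOn hn.integrableOn hAo.measurableSet (hpt n)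
      _ ≤ ∫ y, s ^ n * (f y * (ρ y)⁻¹ ^ n) ∂μ :=
        setIntegral_le_integral hn (.of_forall fun y ↦ by have := hρ₀ y; have := hf₀ y; positivity)
      _ ≤ s ^ n * (C * R⁻¹ ^ n) := by
        rw [integral_const_mul]
        gcongr
        exact hle n
      _ = _ := by ring
  have hlim : Tendsto (fun n : ℕ ↦ C * (s * R⁻¹) ^ n) atTop (𝓝 0) := by
    have hR : 0 < R := hs₀.trans hsR
    have hlt : s * R⁻¹ < 1 := (div_lt_one hR).2 hsR
    simpa only [mul_zero] using
      (tendsto_pow_atTop_nhds_zero_of_lt_one (by positivity) hlt).const_mul C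
  have hzero : ∫ y in {y | ρ y < s}, f y ∂μ = 0 :=
    le_antisymm (ge_of_tendsto' hlim hbound) (integral_nonneg hf₀)
  exact Measure.eqOn_open_of_ae_eq ((setIntegral_eq_zero_iff_of_nonneg_ae (.of_forall hf₀)
    hif.integrableOn).1 hzero) hAo hf.continuousOn continuousOn_const hxs

theorem exists_contDiff_eqOn_ball {V F : Type*} [NormedAddCommGroup V] [NormedSpace ℝ V]
    [HasContDiffBump V] [NormedAddCommGroup F] [NormedSpace ℝ F] {n : ℕ∞} {u : V → F} {W : Set V}
    {q : V} {s r : ℝ} (hW : IsOpen W) (hu : ContDiffOn ℝ n u W) (hs : 0 < s) (hsr : s < r)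
    (hr : Metric.closedBall q r ⊆ W) :
    ∃ φ : V → F, ContDiff ℝ n φ ∧ tsupport φ ⊆ Metric.closedBall q r ∩ tsupport u ∧
      Set.EqOn φ u (Metric.ball q s) := by
  let χ : ContDiffBump q := ⟨s, r, hs, hsr⟩
  have hsub : tsupport (fun x ↦ χ x • u x) ⊆ Metric.closedBall q r :=
    (tsupport_smul_subset_left χ u).trans χ.tsupport_eq.subset
  refine ⟨fun x ↦ χ x • u x, contDiff_iff_contDiffAt.2 fun x ↦ ?_,
    Set.subset_inter hsub (tsupport_smul_subset_right χ u), fun x hx ↦ ?_⟩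
  · by_cases hx : x ∈ W
    · exact χ.contDiffAt.smul (hu.contDiffAt (hW.mem_nhds hx))
    · exact contDiffAt_const.congr_of_eventuallyEq
        (notMem_tsupport_iff_eventuallyEq.1 fun h ↦ hx (hr (hsub h)))
  · simp [χ.one_of_mem_closedBall (Metric.ball_subset_closedBall hx)]

variable {φ u : ℝ × ℝ → ℂ} {q : ℝ × ℝ} {r R V : ℝ}

theorem continuous_planeLaplacian (hφ : ContDiff ℝ 2 φ) : Continuous (planeLaplacian φ) :=
  (contDiff_pd1 (contDiff_pd1 hφ (m := 1) (by norm_num)) (m := 0) (by norm_num)).continuous.add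
    (contDiff_pd2 (contDiff_pd2 hφ (m := 1) (by norm_num)) (m := 0) (by norm_num)).continuous

theorem integrable_sq_norm_mul_inv_sqDist_pow (hφ : Continuous φ) (hφs : HasCompactSupport φ)
    (hq : q ∉ tsupport φ) (n : ℕ) : Integrable fun p ↦ ‖φ p‖ ^ 2 * (sqDist q p)⁻¹ ^ n := by
  simp only [← sq_norm_mul_inv_complexOffset_pow (one_pow 2)]
  exact ((contDiff_mul_inv_complexOffset_pow (one_pow 2) (contDiff_zero.2 hφ) hq n).continuous
    |>.memLp_of_hasCompactSupport hφs.mul_right).integrable_norm_pow two_ne_zero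

theorem sq_norm_mul_inv_pow_le {z w : ℂ} {d : ℝ} (hd : 0 ≤ d) (hR : 0 < R)
    (hle : d < R → ‖w‖ ≤ V * ‖z‖) (n : ℕ) :
    ‖w‖ ^ 2 * d⁻¹ ^ n ≤ V ^ 2 * (‖z‖ ^ 2 * d⁻¹ ^ n) + ‖w‖ ^ 2 * R⁻¹ ^ n := by
  rcases lt_or_ge d R with h | h
  · have hsq : ‖w‖ ^ 2 ≤ V ^ 2 * ‖z‖ ^ 2 :=
      (pow_le_pow_left₀ (norm_nonneg _) (hle h) 2).trans_eq (mul_pow ..)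
    calc
      _ ≤ V ^ 2 * ‖z‖ ^ 2 * d⁻¹ ^ n := by gcongr
      _ = V ^ 2 * (‖z‖ ^ 2 * d⁻¹ ^ n) := mul_assoc ..
      _ ≤ _ := le_add_of_nonneg_right (by positivity)
  · calc
      _ ≤ ‖w‖ ^ 2 * R⁻¹ ^ n := by gcongr
      _ ≤ _ := le_add_of_nonneg_left (by positivity)

theorem integral_weighted_le_of_norm_planeLaplacian_le (hφ : ContDiff ℝ 2 φ)
    (hφs : HasCompactSupport φ) (hq : q ∉ tsupport φ) (hr : ∀ p ∈ tsupport φ, |p.1 - q.1| ≤ r)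
    (hV : 16 * r ^ 4 * V ^ 2 ≤ 1 / 2) (hR : 0 < R)
    (hle : ∀ p, sqDist q p < R → ‖planeLaplacian φ p‖ ≤ V * ‖φ p‖) (n : ℕ) :
    ∫ p, ‖φ p‖ ^ 2 * (sqDist q p)⁻¹ ^ n
      ≤ 32 * r ^ 4 * (∫ p, ‖planeLaplacian φ p‖ ^ 2) * R⁻¹ ^ n := by
  have hΔc := continuous_planeLaplacian hφ
  have hΔs : HasCompactSupport (planeLaplacian φ) :=
    hφs.of_isClosed_subset (isClosed_tsupport _) tsupport_planeLaplacian_subset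
  have hi := integrable_sq_norm_mul_inv_sqDist_pow hφ.continuous hφs hq n
  have hiΔ : Integrable fun p ↦ ‖planeLaplacian φ p‖ ^ 2 :=
    (hΔc.memLp_of_hasCompactSupport hΔs).integrable_norm_pow two_ne_zero
  have hpt (p : ℝ × ℝ) : ‖planeLaplacian φ p‖ ^ 2 * (sqDist q p)⁻¹ ^ n
      ≤ V ^ 2 * (‖φ p‖ ^ 2 * (sqDist q p)⁻¹ ^ n) + ‖planeLaplacian φ p‖ ^ 2 * R⁻¹ ^ n :=
    sq_norm_mul_inv_pow_le (sqDist_nonneg q p) hR (hle p) n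
  have hmono := integral_mono (integrable_sq_norm_mul_inv_sqDist_pow hΔc hΔs
    (fun h ↦ hq (tsupport_planeLaplacian_subset h)) n) ((hi.const_mul _).add (hiΔ.mul_const _)) hpt
  simp only [Pi.add_apply] at hmono
  rw [integral_add (hi.const_mul _) (hiΔ.mul_const _), integral_const_mul, integral_mul_const]
    at hmono
  have hcarleman := carleman_estimate hφ hφs hq hr n
  have hI : 0 ≤ ∫ p, ‖φ p‖ ^ 2 * (sqDist q p)⁻¹ ^ n := integral_nonneg fun p ↦
    mul_nonneg (sq_nonneg _) (pow_nonneg (inv_nonneg.2 (sqDist_nonneg q p)) n)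
  have := mul_le_mul_of_nonneg_left hmono (by positivity : 0 ≤ 16 * r ^ 4)
  have := mul_le_mul_of_nonneg_right hV hI
  linarith

theorem eq_zero_of_norm_planeLaplacian_le (hφ : ContDiff ℝ 2 φ) (hφs : HasCompactSupport φ)
    (hq : q ∉ tsupport φ) (hr : ∀ p ∈ tsupport φ, |p.1 - q.1| ≤ r)
    (hV : 16 * r ^ 4 * V ^ 2 ≤ 1 / 2)
    (hle : ∀ p, sqDist q p < R → ‖planeLaplacian φ p‖ ≤ V * ‖φ p‖) {p : ℝ × ℝ}
    (hp : sqDist q p < R) : φ p = 0 := by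
  have hsq := eq_zero_of_integral_mul_inv_pow_le (hφ.continuous.norm.pow 2)
    (fun _ ↦ sq_nonneg _) (continuous_sqDist q) (sqDist_nonneg q)
    (fun x hx ↦ by simp [sqDist_eq_zero_iff.1 hx, image_eq_zero_of_notMem_tsupport hq])
    (integrable_sq_norm_mul_inv_sqDist_pow hφ.continuous hφs hq)
    (integral_weighted_le_of_norm_planeLaplacian_le hφ hφs hq hr hV
      ((sqDist_nonneg q p).trans_lt hp) hle) hp
  exact norm_eq_zero.1 (pow_eq_zero_iff two_ne_zero |>.1 hsq)

theorem eqOn_zero_ball_of_norm_planeLaplacian_le {W : Set (ℝ × ℝ)} (hW : IsOpen W)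
    (hu : ContDiffOn ℝ 2 u W) (hr : 0 < r) (hrW : Metric.closedBall q r ⊆ W)
    (hV : 16 * r ^ 4 * V ^ 2 ≤ 1 / 2)
    (hle : ∀ p ∈ Metric.closedBall q r, ‖planeLaplacian u p‖ ≤ V * ‖u p‖) (hq : q ∉ tsupport u) :
    Set.EqOn u 0 (Metric.ball q (r / 4)) := by
  obtain ⟨φ, hφ, hφs, hφu⟩ :=
    exists_contDiff_eqOn_ball (n := 2) hW hu (half_pos hr) (half_lt_self hr) hrW
  have hball {p : ℝ × ℝ} (hp : sqDist q p < (r / 2) ^ 2) : p ∈ Metric.ball q (r / 2) :=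
    lt_of_pow_lt_pow_left₀ 2 (half_pos hr).le ((dist_sq_le_sqDist q p).trans_lt hp)
  have hloc {p : ℝ × ℝ} (hp : p ∈ Metric.ball q (r / 2)) : φ =ᶠ[𝓝 p] u :=
    hφu.eventuallyEq_of_mem (Metric.isOpen_ball.mem_nhds hp)
  intro p hp
  rw [← hφu (Metric.ball_subset_ball (by linarith) hp)]
  refine eq_zero_of_norm_planeLaplacian_le (R := (r / 2) ^ 2) hφ ?_ (fun h ↦ hq (hφs h).2) ?_ hV
    ?_ ?_
  · exact (isCompact_closedBall q r).of_isClosed_subset (isClosed_tsupport φ)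
      (hφs.trans Set.inter_subset_left)
  · exact fun x hx ↦ (le_max_left _ _).trans (hφs hx).1
  · intro x hx
    rw [planeLaplacian_congr (hloc (hball hx)), hφu (hball hx)]
    exact hle x (Metric.ball_subset_closedBall (Metric.ball_subset_ball (by linarith) (hball hx)))
  · have := pow_lt_pow_left₀ (Metric.mem_ball.1 hp) dist_nonneg two_ne_zero
    nlinarith [sqDist_le_two_mul_sq_dist q p]

theorem eqOn_zero_of_preconnected_of_norm_planeLaplacian_le {W : Set (ℝ × ℝ)} (hW : IsOpen W)
    (hc : IsPreconnected W) (hu : ContDiffOn ℝ 2 u W)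
    (hle : ∀ p ∈ W, ∃ V, ∀ᶠ x in 𝓝 p, ‖planeLaplacian u x‖ ≤ V * ‖u x‖) {z : ℝ × ℝ} (hz : z ∈ W)
    (hz₀ : u =ᶠ[𝓝 z] 0) : Set.EqOn u 0 W := by
  have hsub : W ⊆ (tsupport u)ᶜ := by
    refine hc.subset_of_closure_inter_subset (isClosed_tsupport u).isOpen_compl
      ⟨z, hz, notMem_tsupport_iff_eventuallyEq.2 hz₀⟩ ?_
    rintro p ⟨hp, hpW⟩
    obtain ⟨V, hV⟩ := hle p hpW
    obtain ⟨δ, hδ, hball⟩ := Metric.eventually_nhds_iff_ball.1 (hV.and (hW.mem_nhds hpW))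
    have hsmall : ∀ᶠ r in 𝓝[>] (0 : ℝ), 16 * r ^ 4 * V ^ 2 ≤ 1 / 2 := by
      have : Tendsto (fun r : ℝ ↦ 16 * r ^ 4 * V ^ 2) (𝓝 0) (𝓝 0) :=
        Continuous.tendsto' (by fun_prop) _ _ (by simp)
      exact (this.mono_left nhdsWithin_le_nhds).eventually_le_const one_half_pos
    obtain ⟨r, hrV, hr, hrδ⟩ := (hsmall.and (Ioo_mem_nhdsGT (half_pos hδ))).exists
    obtain ⟨q, hq, hpq⟩ := Metric.mem_closure_iff.1 hp (r / 8) (by positivity)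
    have hball_sub : Metric.closedBall q r ⊆ Metric.ball p δ :=
      Metric.closedBall_subset_ball' (by rw [dist_comm q p]; linarith)
    have hzero := eqOn_zero_ball_of_norm_planeLaplacian_le hW hu hr
      (fun x hx ↦ (hball x (hball_sub hx)).2) hrV (fun x hx ↦ (hball x (hball_sub hx)).1) hq
    exact notMem_tsupport_iff_eventuallyEq.2 (hzero.eventuallyEq_of_mem
      (Metric.isOpen_ball.mem_nhds (Metric.mem_ball.2 (hpq.trans (by linarith)))))
  exact fun p hp ↦ image_eq_zero_of_notMem_tsupport (hsub hp)

end UniqueContinuation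

theorem GravityHelmholtzAt.norm_planeLaplacian {E : ℝ} {u : ℝ × ℝ → ℂ} {p : ℝ × ℝ}
    (h : GravityHelmholtzAt E u p) : ‖planeLaplacian u p‖ = |E + p.2| * ‖u p‖ := by
  have heq : planeLaplacian u p = -(((E + p.2 : ℝ) : ℂ) * u p) := eq_neg_of_add_eq_zero_left h
  rw [heq, norm_neg, norm_mul, Complex.norm_real, Real.norm_eq_abs]

theorem mem_compl_closure_of_lt_snd {Ω : Set (ℝ × ℝ)} {M : ℝ}
    (hM : Ω ⊆ Metric.closedBall 0 M) {p : ℝ × ℝ} (hp : M < p.2) : p ∈ (closure Ω)ᶜ := by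
  intro hmem
  have hnorm : ‖p‖ ≤ M :=
    mem_closedBall_zero_iff.1 (closure_minimal hM Metric.isClosed_closedBall hmem)
  exact hp.not_ge (((le_abs_self p.2).trans (norm_snd_le p)).trans hnorm)

theorem cartesian_rellich_general (E : ℝ) {W : Set (ℝ × ℝ)} (hW : IsOpen W)
    (hc : IsPreconnected W) {M : ℝ} (hM : ∀ p : ℝ × ℝ, M < p.2 → p ∈ W) {u : ℝ × ℝ → ℂ}
    (hu : ContDiffOn ℝ 2 u W) (hpde : ∀ p ∈ W, GravityHelmholtzAt E u p)
    (hint : ∀ᶠ x in atTop, Integrable fun t ↦ ‖u (t, x)‖ ^ 2)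
    (hlim : Tendsto (fun x ↦ √(E + x) * ∫ t, ‖u (t, x)‖ ^ 2) atTop (𝓝 0)) :
    ∀ p ∈ W, u p = 0 := by
  have hsub : Set.univ ×ˢ Set.Ioi M ⊆ W := fun p hp ↦ hM p hp.2
  obtain ⟨a, ha⟩ :=
    exists_eq_zero_of_lt_snd (hu.mono hsub) (fun p hp ↦ hpde p (hsub hp)) hint hlim
  obtain ⟨b, hab, hMb⟩ : ∃ b, a < b ∧ M < b :=
    ((eventually_gt_atTop a).and (eventually_gt_atTop M)).exists
  refine eqOn_zero_of_preconnected_of_norm_planeLaplacian_le hW hc hu (fun p hp ↦ ?_)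
    (hM (0, b) hMb) ?_
  · have hcont : Continuous fun x : ℝ × ℝ ↦ |E + x.2| := by fun_prop
    refine ⟨|E + p.2| + 1, ?_⟩
    filter_upwards [hW.mem_nhds hp, hcont.continuousAt.eventually_lt_const (lt_add_one _)]
      with x hxW hx
    rw [(hpde x hxW).norm_planeLaplacian]
    gcongr
  · filter_upwards [continuous_snd.continuousAt.eventually_const_lt hab] with p hp
    exact ha p hp

/-- Lemma 2 of the paper (Cartesian Rellich lemma). -/
theorem cartesian_rellich
    (E : ℝ) (Ω : Set (ℝ × ℝ)) (hΩb : Bornology.IsBounded Ω)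
    (hconn : IsConnected ((closure Ω)ᶜ))
    (u : ℝ × ℝ → ℂ)
    (hu : ContDiffOn ℝ 2 u ((closure Ω)ᶜ))
    (hpde : ∀ x ∈ (closure Ω)ᶜ, GravityHelmholtzAt E u x)
    (hint : ∀ᶠ x₂ in atTop, Integrable (fun x₁ : ℝ => ‖u (x₁, x₂)‖ ^ 2))
    (hlim : Tendsto (fun x₂ : ℝ =>
        Real.sqrt (E + x₂) * ∫ x₁ : ℝ, ‖u (x₁, x₂)‖ ^ 2) atTop (𝓝 0)) :
    ∀ x ∈ (closure Ω)ᶜ, u x = 0 := by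
  obtain ⟨M, hM⟩ := hΩb.subset_closedBall 0
  exact cartesian_rellich_general E isClosed_closure.isOpen_compl hconn.isPreconnected
    (fun _ ↦ mem_compl_closure_of_lt_snd hM) hu hpde hint hlim
end

section
/- Classically allowed and forbidden regions (the paper's Proposition 1): Let E ∈ ℝ and x = (x₁,x₂), y = (y₁,y₂) ∈ ℝ². There exist a time t ≥ 0 and an initial momentum ρ = (ρ₁,ρ₂) ∈ ℝ² with ρ₁² + ρ₂² = E + y₂, x₁ = y₁ + 2ρ₁t and x₂ = y₂ + 2ρ₂t + t², if and only if |x − y| ≤ x₂ + y₂ + 2E. Equivalently: rays launched from y at energy E cannot reach any point of the forbidden region { x : |x − y|/2 > (x₂ + y₂)/2 + E } (whose boundary is the parabola with focus y and directrix x₂ = −y₂ − 2E), and can reach every point of its complement. -/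
/-!
Let `g` be the force. The final momentum `p` of a ray satisfies `p - ρ = t g` and
`x - y = t (p + ρ)`. Conservation of energy and the parallelogram law therefore give
`2 (⟪g, x + y⟫ + 2 E) = 2 (‖p‖² + ‖ρ‖²) = ‖p - ρ‖² + ‖p + ρ‖²`, and the criterion is the inequality
between the arithmetic and geometric means of the two terms on the right. Conversely, the same
identity is a quadratic equation for `t²`, which the criterion makes solvable in positive reals
when `x ≠ y`; its solution determines the ray.
-/

open scoped RealInnerProductSpace

theorem exists_pos_mul_sq_add_eq_two_mul {a b c : ℝ} (ha : 0 < a) (hb : 0 < b)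
    (hac : a * c ≤ b ^ 2) : ∃ s : ℝ, 0 < s ∧ a * s ^ 2 + c = 2 * b * s := by
  refine ⟨(b + √(b ^ 2 - a * c)) / a, by positivity, ?_⟩
  have hsq : √(b ^ 2 - a * c) ^ 2 = b ^ 2 - a * c := Real.sq_sqrt (sub_nonneg.2 hac)
  field_simp
  linear_combination hsq

namespace UniformForce

variable {V : Type*} [NormedAddCommGroup V] [InnerProductSpace ℝ V]

/-- The Hamiltonian `H(x, p) = |p|² - ⟪g, x⟫` of a particle in the constant force field `g`.
In the plane with `g = (0, 1)` it is the symbol `|p|² - x₂` of the gravity Helmholtz operator. -/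
noncomputable def hamiltonian (g x p : V) : ℝ := ‖p‖ ^ 2 - ⟪g, x⟫

/-- The position at time `t` of the classical ray launched from `y` with momentum `ρ`; the factor
`2` comes from `x' = ∂H/∂p = 2p`. -/
def position (g y ρ : V) (t : ℝ) : V := y + (2 * t) • ρ + t ^ 2 • g

/-- The momentum at time `t` of the classical ray launched with momentum `ρ`. -/
def momentum (g ρ : V) (t : ℝ) : V := ρ + t • g

theorem momentum_sub_initial (g ρ : V) (t : ℝ) : momentum g ρ t - ρ = t • g := by
  rw [momentum, add_sub_cancel_left]

theorem position_sub_initial (g y ρ : V) (t : ℝ) :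
    position g y ρ t - y = t • (momentum g ρ t + ρ) := by
  rw [position, momentum]
  module

theorem hamiltonian_position_momentum (g y ρ : V) (t : ℝ) :
    hamiltonian g (position g y ρ t) (momentum g ρ t) = hamiltonian g y ρ := by
  simp only [hamiltonian, position, momentum, norm_add_sq_real, norm_smul, mul_pow,
    Real.norm_eq_abs, sq_abs, inner_add_right, inner_smul_right, real_inner_self_eq_norm_sq,
    real_inner_comm ρ g]
  ring

theorem two_mul_inner_position_add_eq (g y ρ : V) (t : ℝ) :
    2 * (⟪g, position g y ρ t + y⟫ + 2 * hamiltonian g y ρ) =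
      ‖momentum g ρ t - ρ‖ ^ 2 + ‖momentum g ρ t + ρ‖ ^ 2 := by
  have conservation := hamiltonian_position_momentum g y ρ t
  have parallelogram := parallelogram_law_with_norm ℝ (momentum g ρ t) ρ
  simp only [hamiltonian] at conservation ⊢
  rw [inner_add_right]
  linarith

theorem norm_mul_norm_position_sub_le (g y ρ : V) (t : ℝ) :
    ‖g‖ * ‖position g y ρ t - y‖ ≤ ⟪g, position g y ρ t + y⟫ + 2 * hamiltonian g y ρ := by
  have hprod : ‖g‖ * ‖position g y ρ t - y‖ = ‖momentum g ρ t - ρ‖ * ‖momentum g ρ t + ρ‖ := by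
    rw [position_sub_initial, momentum_sub_initial, norm_smul, norm_smul]
    ring
  have amgm := two_mul_le_add_sq ‖momentum g ρ t - ρ‖ ‖momentum g ρ t + ρ‖
  rw [← two_mul_inner_position_add_eq g y ρ t] at amgm
  linarith

theorem norm_sq_mul_add_norm_position_sub_sq (g y ρ : V) (t : ℝ) :
    ‖g‖ ^ 2 * (t ^ 2) ^ 2 + ‖position g y ρ t - y‖ ^ 2 =
      2 * (⟪g, position g y ρ t + y⟫ + 2 * hamiltonian g y ρ) * t ^ 2 := by
  rw [two_mul_inner_position_add_eq, position_sub_initial, momentum_sub_initial, norm_smul,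
    norm_smul, mul_pow, mul_pow, Real.norm_eq_abs, sq_abs]
  ring

/-- The momentum whose ray from `y` is at `x` at time `t`. At `t = 0` it is the junk value `0`. -/
noncomputable def aim (g x y : V) (t : ℝ) : V := (2 * t)⁻¹ • (x - y - t ^ 2 • g)

theorem position_aim (g x y : V) {t : ℝ} (ht : t ≠ 0) : position g y (aim g x y t) t = x := by
  rw [position, aim, smul_inv_smul₀ (mul_ne_zero two_ne_zero ht)]
  abel

theorem hamiltonian_aim_eq {g x y : V} {t E : ℝ} (ht : t ≠ 0)
    (h : ‖g‖ ^ 2 * (t ^ 2) ^ 2 + ‖x - y‖ ^ 2 = 2 * (⟪g, x + y⟫ + 2 * E) * t ^ 2) :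
    hamiltonian g y (aim g x y t) = E := by
  have haim := norm_sq_mul_add_norm_position_sub_sq g y (aim g x y t) t
  rw [position_aim g x y ht, h] at haim
  have := mul_right_cancel₀ (pow_ne_zero 2 ht) haim
  linarith

theorem exists_momentum_hamiltonian_eq [Nontrivial V] {g y : V} {E : ℝ} (h : 0 ≤ E + ⟪g, y⟫) :
    ∃ ρ : V, hamiltonian g y ρ = E := by
  obtain ⟨ρ, hρ⟩ := exists_norm_eq V (Real.sqrt_nonneg (E + ⟪g, y⟫))
  exact ⟨ρ, by rw [hamiltonian, hρ, Real.sq_sqrt h, add_sub_cancel_right]⟩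

theorem exists_position_eq_of_ne {g x y : V} {E : ℝ} (hg : g ≠ 0) (hxy : x ≠ y)
    (h : ‖g‖ * ‖x - y‖ ≤ ⟪g, x + y⟫ + 2 * E) :
    ∃ t : ℝ, 0 < t ∧ ∃ ρ : V, hamiltonian g y ρ = E ∧ x = position g y ρ t := by
  have hg' : 0 < ‖g‖ := norm_pos_iff.2 hg
  have hxy' : 0 < ‖x - y‖ := norm_sub_pos_iff.2 hxy
  have hdiscrim : ‖g‖ ^ 2 * ‖x - y‖ ^ 2 ≤ (⟪g, x + y⟫ + 2 * E) ^ 2 := by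
    rw [← mul_pow]
    gcongr
  obtain ⟨s, hs, hroot⟩ :=
    exists_pos_mul_sq_add_eq_two_mul (pow_pos hg' 2) ((mul_pos hg' hxy').trans_le h) hdiscrim
  have ht : 0 < √s := Real.sqrt_pos.2 hs
  rw [← Real.sq_sqrt hs.le] at hroot
  exact ⟨√s, ht, aim g x y √s, hamiltonian_aim_eq ht.ne' hroot, (position_aim g x y ht.ne').symm⟩

theorem hamiltonian_plane (x₁ x₂ p₁ p₂ : ℝ) :
    hamiltonian !₂[0, 1] !₂[x₁, x₂] !₂[p₁, p₂] = p₁ ^ 2 + p₂ ^ 2 - x₂ := by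
  simp [hamiltonian, EuclideanSpace.real_norm_sq_eq, PiLp.inner_apply]

theorem position_plane (y₁ y₂ ρ₁ ρ₂ t : ℝ) :
    position !₂[0, 1] !₂[y₁, y₂] !₂[ρ₁, ρ₂] t =
      !₂[y₁ + 2 * ρ₁ * t, y₂ + 2 * ρ₂ * t + t ^ 2] := by
  ext i
  fin_cases i <;> simp [position] <;> ring

theorem exists_plane_iff {P : EuclideanSpace ℝ (Fin 2) → Prop} :
    (∃ v, P v) ↔ ∃ a b, P !₂[a, b] := by
  simp [(WithLp.toLp_surjective 2).exists, Fin.exists_fin_succ_pi]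

end UniformForce

open UniformForce

theorem classically_allowed_iff_general {V : Type*} [NormedAddCommGroup V] [InnerProductSpace ℝ V]
    {g : V} (hg : g ≠ 0) (E : ℝ) (x y : V) :
    (∃ t : ℝ, 0 ≤ t ∧ ∃ ρ : V, hamiltonian g y ρ = E ∧ x = position g y ρ t) ↔
      ‖g‖ * ‖x - y‖ ≤ ⟪g, x + y⟫ + 2 * E := by
  constructor
  · rintro ⟨t, -, ρ, rfl, rfl⟩
    exact norm_mul_norm_position_sub_le g y ρ t
  · intro h
    rcases eq_or_ne x y with rfl | hxy
    · have : Nontrivial V := nontrivial_of_ne g 0 hg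
      have henergy : 0 ≤ E + ⟪g, x⟫ := by
        rw [sub_self, norm_zero, mul_zero, inner_add_right] at h
        linarith
      obtain ⟨ρ, hρ⟩ := exists_momentum_hamiltonian_eq henergy
      exact ⟨0, le_rfl, ρ, hρ, by simp [position]⟩
    · obtain ⟨t, ht, hray⟩ := exists_position_eq_of_ne hg hxy h
      exact ⟨t, ht.le, hray⟩

/-- Proposition 1 of the paper: a classical ray launched from `y = (y₁,y₂)` at
energy `E` (i.e. with initial momentum `ρ` satisfying `ρ₁² + ρ₂² = E + y₂`,
following the trajectory `t ↦ (y₁ + 2ρ₁t, y₂ + 2ρ₂t + t²)`) can reach the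
target `x = (x₁,x₂)` if and only if `|x − y| ≤ x₂ + y₂ + 2E`; the forbidden
region is `|x − y|/2 > (x₂ + y₂)/2 + E`. -/
theorem classically_allowed_iff
    (E x₁ x₂ y₁ y₂ : ℝ) :
    (∃ t : ℝ, 0 ≤ t ∧ ∃ ρ₁ ρ₂ : ℝ,
        ρ₁ ^ 2 + ρ₂ ^ 2 = E + y₂ ∧
        x₁ = y₁ + 2 * ρ₁ * t ∧
        x₂ = y₂ + 2 * ρ₂ * t + t ^ 2) ↔
      Real.sqrt ((x₁ - y₁) ^ 2 + (x₂ - y₂) ^ 2) ≤ x₂ + y₂ + 2 * E := by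
  have h := classically_allowed_iff_general (g := !₂[0, 1]) (by simp) E !₂[x₁, x₂] !₂[y₁, y₂]
  simpa [exists_plane_iff, hamiltonian_plane, position_plane, EuclideanSpace.norm_eq,
    PiLp.inner_apply, sub_eq_iff_eq_add] using h
end

section
/- Travel-time quartic equation: Let E ∈ ℝ, x = (x₁,x₂), y = (y₁,y₂) ∈ ℝ², and t > 0. Set a := |x − y|²/4 and b := (x₂ + y₂)/2 + E. Then there exists ρ = (ρ₁,ρ₂) ∈ ℝ² with ρ₁² + ρ₂² = E + y₂, x₁ = y₁ + 2ρ₁t and x₂ = y₂ + 2ρ₂t + t², if and only if t⁴/4 − b·t² + a = 0. (Moreover, when the quartic holds, ρ is uniquely given by ρ₁ = (x₁ − y₁)/(2t) and ρ₂ = (x₂ − y₂ − t²)/(2t).) -/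
/-!
The endpoint of a ray is affine in its momentum, so for `t ≠ 0` there is exactly one momentum
carrying `y` to `x` in time `t`. Such a ray exists at energy `E` precisely when this momentum
satisfies the energy constraint. Clearing the factor `(2t)²` and expanding the squared norm turns
the constraint into the quartic.
-/

section Trajectory

variable {V : Type*} [AddCommGroup V] [Module ℝ V]

/-- The position at time `t` of the classical ray launched from `y` with momentum `ρ` under the
constant force `g`. It solves the Hamilton equations `ẋ = 2ρ`, `ρ̇ = g` of the symbol
`‖ρ‖² - ⟪g, x⟫ - E` of `-(Δ + E + ⟪g, x⟫)`; the gravity Helmholtz equation has `g = (0, 1)`. -/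
def rayPosition (g y ρ : V) (t : ℝ) : V :=
  y + (2 * t) • ρ + t ^ 2 • g

/-- The initial momentum of the ray from `y` to `x` with travel time `t` under the constant
force `g`. At `t = 0` it has the junk value `0`. -/
noncomputable def launchMomentum (g x y : V) (t : ℝ) : V :=
  (2 * t)⁻¹ • (x - y - t ^ 2 • g)

theorem eq_rayPosition_iff_eq_launchMomentum {g x y ρ : V} {t : ℝ} (ht : t ≠ 0) :
    x = rayPosition g y ρ t ↔ ρ = launchMomentum g x y t := by
  have two_t_ne_zero : 2 * t ≠ 0 := mul_ne_zero two_ne_zero ht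
  rw [rayPosition, launchMomentum, eq_inv_smul_iff₀ two_t_ne_zero, eq_sub_iff_add_eq,
    eq_sub_iff_add_eq', ← add_assoc, eq_comm]

end Trajectory

section Energy

open scoped InnerProductSpace

variable {V : Type*} [NormedAddCommGroup V] [InnerProductSpace ℝ V]

theorem norm_launchMomentum_sq (g x y : V) (t : ℝ) :
    ‖launchMomentum g x y t‖ ^ 2 =
      (‖x - y‖ ^ 2 - 2 * t ^ 2 * ⟪g, x - y⟫_ℝ + t ^ 4 * ‖g‖ ^ 2) / (2 * t) ^ 2 := by
  rw [launchMomentum, norm_smul, mul_pow, norm_sub_sq_real, norm_smul, real_inner_smul_right,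
    real_inner_comm, mul_pow, norm_inv, inv_pow, Real.norm_eq_abs, Real.norm_eq_abs, sq_abs,
    sq_abs]
  ring

theorem norm_launchMomentum_sq_eq_iff {g x y : V} {E t : ℝ} (ht : t ≠ 0) :
    ‖launchMomentum g x y t‖ ^ 2 = E + ⟪g, y⟫_ℝ ↔
      ‖g‖ ^ 2 * t ^ 4 / 4 - (⟪g, x + y⟫_ℝ / 2 + E) * t ^ 2 + ‖x - y‖ ^ 2 / 4 = 0 := by
  have two_t_sq_ne_zero : (2 * t) ^ 2 ≠ 0 := pow_ne_zero 2 (mul_ne_zero two_ne_zero ht)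
  rw [norm_launchMomentum_sq, div_eq_iff two_t_sq_ne_zero, inner_sub_right, inner_add_right]
  constructor <;> intro h
  · linear_combination h / 4
  · linear_combination 4 * h

theorem travel_time_quartic_general {g x y ρ : V} {E t : ℝ} (ht : t ≠ 0) :
    ‖ρ‖ ^ 2 = E + ⟪g, y⟫_ℝ ∧ x = rayPosition g y ρ t ↔
      ρ = launchMomentum g x y t ∧
        ‖g‖ ^ 2 * t ^ 4 / 4 - (⟪g, x + y⟫_ℝ / 2 + E) * t ^ 2 + ‖x - y‖ ^ 2 / 4 = 0 := by
  rw [eq_rayPosition_iff_eq_launchMomentum ht, ← norm_launchMomentum_sq_eq_iff ht, and_comm]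
  exact and_congr_right fun momentum_eq => by rw [momentum_eq]

end Energy

theorem planar_ray_iff {E x₁ x₂ y₁ y₂ ρ₁ ρ₂ t : ℝ} (ht : t ≠ 0) :
    (ρ₁ ^ 2 + ρ₂ ^ 2 = E + y₂ ∧ x₁ = y₁ + 2 * ρ₁ * t ∧ x₂ = y₂ + 2 * ρ₂ * t + t ^ 2) ↔
      (ρ₁ = (x₁ - y₁) / (2 * t) ∧ ρ₂ = (x₂ - y₂ - t ^ 2) / (2 * t)) ∧
        t ^ 4 / 4 - ((x₂ + y₂) / 2 + E) * t ^ 2 + ((x₁ - y₁) ^ 2 + (x₂ - y₂) ^ 2) / 4 = 0 := by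
  have planar := travel_time_quartic_general (g := !₂[(0 : ℝ), 1]) (x := !₂[x₁, x₂])
    (y := !₂[y₁, y₂]) (ρ := !₂[ρ₁, ρ₂]) (E := E) ht
  simpa [rayPosition, launchMomentum, EuclideanSpace.norm_sq_eq, PiLp.inner_apply, PiLp.ext_iff,
    Fin.forall_fin_two, div_eq_inv_mul, mul_right_comm] using planar

/-- Travel-time quartic equation: for `t > 0`, a ray from `y` at energy `E`
reaches `x` in time exactly `t` iff `t⁴/4 − b·t² + a = 0`, where
`a = |x − y|²/4` and `b = (x₂ + y₂)/2 + E`; moreover the initial momentum is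
then uniquely `ρ₁ = (x₁ − y₁)/(2t)`, `ρ₂ = (x₂ − y₂ − t²)/(2t)`. -/
theorem travel_time_quartic
    (E x₁ x₂ y₁ y₂ t a b : ℝ) (ht : 0 < t)
    (ha : a = ((x₁ - y₁) ^ 2 + (x₂ - y₂) ^ 2) / 4)
    (hb : b = (x₂ + y₂) / 2 + E) :
    ((∃ ρ₁ ρ₂ : ℝ,
        ρ₁ ^ 2 + ρ₂ ^ 2 = E + y₂ ∧
        x₁ = y₁ + 2 * ρ₁ * t ∧
        x₂ = y₂ + 2 * ρ₂ * t + t ^ 2) ↔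
      t ^ 4 / 4 - b * t ^ 2 + a = 0) ∧
    (t ^ 4 / 4 - b * t ^ 2 + a = 0 →
      ∀ ρ₁ ρ₂ : ℝ,
        (ρ₁ ^ 2 + ρ₂ ^ 2 = E + y₂ ∧
          x₁ = y₁ + 2 * ρ₁ * t ∧
          x₂ = y₂ + 2 * ρ₂ * t + t ^ 2) →
        ρ₁ = (x₁ - y₁) / (2 * t) ∧ ρ₂ = (x₂ - y₂ - t ^ 2) / (2 * t)) := by
  subst ha hb
  simp only [planar_ray_iff ht.ne']
  exact ⟨⟨fun ⟨_, _, _, quartic⟩ => quartic, fun quartic => ⟨_, _, ⟨rfl, rfl⟩, quartic⟩⟩,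
    fun _ _ _ ray => ray.1⟩
end

section
/- The explicit propagator solves the time-dependent Schrödinger equation in a linear potential (key step in the paper's Lemma 1, two-dimensional case): Fix y = (y₁,y₂) ∈ ℝ², and for t > 0 and (x₁,x₂) ∈ ℝ² define Φ̃(x₁,x₂,t) := (1/(4πt)) · exp( i·( ((x₁−y₁)² + (x₂−y₂)²)/(4t) + ((x₂+y₂)/2)·t − t³/12 ) ). Then for every t > 0 and every (x₁,x₂) ∈ ℝ², ∂²Φ̃/∂x₁² + ∂²Φ̃/∂x₂² + i·∂Φ̃/∂t + x₂·Φ̃ = 0. -/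
open Real

/-!
Write the propagator as `a(t) e^{iS(x,t)}`. Differentiating, `Δu + i∂ₜu + Vu` equals
`i(a' + aΔS)e^{iS} + (V - ∂ₜS - |∇S|²)u`, so `u` solves the Schrödinger equation as soon as `S`
solves the Hamilton–Jacobi equation `∂ₜS + |∇S|² = V` and `a` the transport equation
`a' + aΔS = 0`. For a uniform force the action is a sum of one-dimensional actions, each with
`∂²S/∂x² = 1/(2t)`, so that in dimension `d` the transport equation is solved by `t^(-d/2)`.
-/

theorem hasDerivAt_mul_cexp_I_mul {a : ℝ → ℂ} {a' : ℂ} {S : ℝ → ℝ} {S' s : ℝ}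
    (ha : HasDerivAt a a' s) (hS : HasDerivAt S S' s) :
    HasDerivAt (fun r => a r * Complex.exp (Complex.I * S r))
      ((a' + Complex.I * S' * a s) * Complex.exp (Complex.I * S s)) s :=
  (ha.mul (hS.ofReal_comp.const_mul Complex.I).cexp).congr_deriv (by ring)

theorem deriv_deriv_const_mul_cexp_I_mul {c : ℂ} {S S' : ℝ → ℝ} {S'' s : ℝ}
    (hS : ∀ᶠ r in nhds s, HasDerivAt S (S' r) r) (hS' : HasDerivAt S' S'' s) :
    deriv (fun r => deriv (fun r' => c * Complex.exp (Complex.I * S r')) r) s =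
      (Complex.I * S'' - S' s ^ 2) * (c * Complex.exp (Complex.I * S s)) := by
  have first_deriv : (fun r => deriv (fun r' => c * Complex.exp (Complex.I * S r')) r) =ᶠ[nhds s]
      fun r => Complex.I * S' r * c * Complex.exp (Complex.I * S r) := by
    filter_upwards [hS] with r hr
    simpa only [zero_add] using (hasDerivAt_mul_cexp_I_mul (hasDerivAt_const r c) hr).deriv
  have second_deriv := hasDerivAt_mul_cexp_I_mul
    ((hS'.ofReal_comp.const_mul Complex.I).mul_const c) hS.self_of_nhds
  rw [first_deriv.deriv_eq, second_deriv.deriv]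
  linear_combination (S' s ^ 2 * c * Complex.exp (Complex.I * S s)) * Complex.I_sq

theorem schrodinger_of_hamiltonJacobi_of_transport {ι : Type*} [Fintype ι] [DecidableEq ι]
    {a : ℝ → ℂ} {a' : ℂ} {S : (ι → ℝ) → ℝ → ℝ} {S' : ι → ℝ → ℝ} {S'' : ι → ℝ} {Sₜ V t : ℝ}
    {x : ι → ℝ}
    (hS : ∀ i, ∀ᶠ r in nhds (x i), HasDerivAt (fun r' => S (Function.update x i r') t) (S' i r) r)
    (hS' : ∀ i, HasDerivAt (S' i) (S'' i) (x i))
    (hSₜ : HasDerivAt (S x) Sₜ t) (ha : HasDerivAt a a' t)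
    (hamiltonJacobi : Sₜ + ∑ i, S' i (x i) ^ 2 = V)
    (transport : a' + a t * ∑ i, (S'' i : ℂ) = 0) :
    ∑ i, deriv (fun r => deriv (fun r' =>
        a t * Complex.exp (Complex.I * S (Function.update x i r') t)) r) (x i) +
      Complex.I * deriv (fun τ => a τ * Complex.exp (Complex.I * S x τ)) t +
      V * (a t * Complex.exp (Complex.I * S x t)) = 0 := by
  have space (i : ι) := deriv_deriv_const_mul_cexp_I_mul (c := a t) (hS i) (hS' i)
  simp only [Function.update_eq_self] at space
  have laplacian : ∑ i, deriv (fun r => deriv (fun r' =>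
        a t * Complex.exp (Complex.I * S (Function.update x i r') t)) r) (x i) =
      (Complex.I * ∑ i, (S'' i : ℂ) - ∑ i, (S' i (x i) : ℂ) ^ 2) *
        (a t * Complex.exp (Complex.I * S x t)) := by
    simp only [space, ← Finset.sum_mul, Finset.sum_sub_distrib, Finset.mul_sum]
  have hamiltonJacobi_complex : (Sₜ : ℂ) + ∑ i, (S' i (x i) : ℂ) ^ 2 = V := by
    exact_mod_cast hamiltonJacobi
  rw [laplacian, (hasDerivAt_mul_cexp_I_mul ha hSₜ).deriv]
  linear_combination Complex.exp (Complex.I * S x t) * (Complex.I * transport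
    - a t * hamiltonJacobi_complex + Sₜ * a t * Complex.I_sq)

section UniformForce

/-- The one-dimensional classical action of the Hamiltonian `p² - f ξ` along the trajectory from
`η` to `ξ` in time `t`. -/
noncomputable def uniformForceAction (f η ξ t : ℝ) : ℝ :=
  (ξ - η) ^ 2 / (4 * t) + f * ((ξ + η) / 2) * t - f ^ 2 * t ^ 3 / 12

/-- The momentum with which the trajectory of `uniformForceAction` arrives at `ξ`; it is the
derivative of the action with respect to `ξ`. -/
noncomputable def uniformForceMomentum (f η ξ t : ℝ) : ℝ :=
  (ξ - η) / (2 * t) + f * t / 2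

theorem hasDerivAt_uniformForceAction_position (f η ξ t : ℝ) :
    HasDerivAt (fun r => uniformForceAction f η r t) (uniformForceMomentum f η ξ t) ξ := by
  have kinetic := (((hasDerivAt_id' ξ).sub_const η).fun_pow 2).div_const (4 * t)
  have potential := ((((hasDerivAt_id' ξ).add_const η).div_const 2).const_mul f).mul_const t
  exact ((kinetic.fun_add potential).sub_const (f ^ 2 * t ^ 3 / 12)).congr_deriv
    (by rw [uniformForceMomentum]; ring)

theorem hasDerivAt_uniformForceMomentum (f η ξ t : ℝ) :
    HasDerivAt (fun r => uniformForceMomentum f η r t) (1 / (2 * t)) ξ :=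
  (((hasDerivAt_id' ξ).sub_const η).div_const (2 * t)).add_const (f * t / 2)

theorem hasDerivAt_uniformForceAction_time (f η ξ : ℝ) {t : ℝ} (ht : t ≠ 0) :
    HasDerivAt (uniformForceAction f η ξ) (f * ξ - uniformForceMomentum f η ξ t ^ 2) t := by
  have kinetic := (hasDerivAt_const t ((ξ - η) ^ 2)).fun_div
    ((hasDerivAt_id' t).const_mul 4) (mul_ne_zero four_ne_zero ht)
  have potential := (hasDerivAt_id' t).const_mul (f * ((ξ + η) / 2))
  have cubic := (((hasDerivAt_id' t).fun_pow 3).const_mul (f ^ 2)).div_const 12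
  exact ((kinetic.fun_add potential).fun_sub cubic).congr_deriv
    (by rw [uniformForceMomentum]; field_simp; ring)

theorem hasDerivAt_ofReal_const_mul_cpow {k t : ℝ} (hk : k ≠ 0) (ht : t ≠ 0) (z : ℂ) :
    HasDerivAt (fun τ : ℝ => ((k * τ : ℝ) : ℂ) ^ z) (z / t * ((k * t : ℝ) : ℂ) ^ z) t := by
  rcases eq_or_ne z 0 with rfl | hz
  · simpa only [Complex.cpow_zero, zero_div, zero_mul] using hasDerivAt_const t (1 : ℂ)
  · have hk_complex : (k : ℂ) ≠ 0 := Complex.ofReal_ne_zero.mpr hk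
    have hkt_complex : ((k * t : ℝ) : ℂ) ≠ 0 := Complex.ofReal_ne_zero.mpr (mul_ne_zero hk ht)
    refine ((hasDerivAt_ofReal_cpow_const (mul_ne_zero hk ht) hz).scomp t
      ((hasDerivAt_id' t).const_mul k)).congr_deriv ?_
    rw [Complex.cpow_sub _ _ hkt_complex, Complex.cpow_one, Complex.real_smul]
    push_cast
    field_simp

/-- The amplitude of the free propagator in dimension `d`, without the constant phase `i^(-d/2)`.
The power is complex so that, through the principal branch, it also covers `t < 0`. -/
noncomputable def freeAmplitude (d : ℕ) (t : ℝ) : ℂ :=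
  ((4 * π * t : ℝ) : ℂ) ^ (-(d : ℂ) / 2)

theorem hasDerivAt_freeAmplitude (d : ℕ) {t : ℝ} (ht : t ≠ 0) :
    HasDerivAt (freeAmplitude d) (-(d / (2 * t)) * freeAmplitude d t) t := by
  have power := hasDerivAt_ofReal_const_mul_cpow (mul_ne_zero four_ne_zero pi_ne_zero) ht (-d / 2)
  exact power.congr_deriv (by rw [freeAmplitude]; ring)

theorem freeAmplitude_two (t : ℝ) : freeAmplitude 2 t = (1 / (4 * π * t) : ℝ) := by
  rw [freeAmplitude, Nat.cast_ofNat, neg_div, div_self two_ne_zero, Complex.cpow_neg_one,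
    one_div, Complex.ofReal_inv]

variable {ι : Type*} [Fintype ι]

/-- The propagator, for source `y`, of the Schrödinger operator `Δ + i∂ₜ + F·x` on `ℝ^ι`, up to
the constant phase omitted from `freeAmplitude`. -/
noncomputable def uniformForcePropagator (F y x : ι → ℝ) (t : ℝ) : ℂ :=
  freeAmplitude (Fintype.card ι) t *
    Complex.exp (Complex.I * (∑ i, uniformForceAction (F i) (y i) (x i) t : ℝ))

theorem hasDerivAt_sum_uniformForceAction_update [DecidableEq ι] (F y x : ι → ℝ) (t : ℝ) (i : ι)
    (r : ℝ) :
    HasDerivAt (fun r' => ∑ j, uniformForceAction (F j) (y j) (Function.update x i r' j) t)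
      (uniformForceMomentum (F i) (y i) r t) r := by
  have sum_update (r' : ℝ) : ∑ j, uniformForceAction (F j) (y j) (Function.update x i r' j) t =
      uniformForceAction (F i) (y i) r' t +
        ∑ j ∈ {i}ᶜ, uniformForceAction (F j) (y j) (x j) t := by
    rw [Fintype.sum_eq_add_sum_compl i, Function.update_self]
    congr 1
    refine Finset.sum_congr rfl fun j hj => ?_
    rw [Function.update_of_ne (by simpa using hj)]
  simp only [sum_update]
  exact (hasDerivAt_uniformForceAction_position (F i) (y i) r t).add_const _

theorem uniformForcePropagator_fin_two (y₁ y₂ x₁ x₂ t : ℝ) :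
    uniformForcePropagator ![0, 1] ![y₁, y₂] ![x₁, x₂] t =
      ((1 / (4 * π * t) : ℝ) : ℂ) * Complex.exp (Complex.I *
        (((x₁ - y₁) ^ 2 + (x₂ - y₂) ^ 2) / (4 * t) + ((x₂ + y₂) / 2) * t - t ^ 3 / 12 : ℝ)) := by
  have action : ∑ i, uniformForceAction (![0, 1] i) (![y₁, y₂] i) (![x₁, x₂] i) t =
      ((x₁ - y₁) ^ 2 + (x₂ - y₂) ^ 2) / (4 * t) + ((x₂ + y₂) / 2) * t - t ^ 3 / 12 := by
    simp only [uniformForceAction, Fin.sum_univ_two, Matrix.cons_val_zero, Matrix.cons_val_one]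
    ring
  rw [uniformForcePropagator, Fintype.card_fin, freeAmplitude_two, action]

theorem update_vec_two_zero {α : Type*} (a b c : α) : Function.update ![a, b] 0 c = ![c, b] :=
  Fin.update_cons_zero _ _ _

theorem update_vec_two_one {α : Type*} (a b c : α) : Function.update ![a, b] 1 c = ![a, c] := by
  ext i; fin_cases i <;> rfl

theorem propagator_solves_schrodinger_general [DecidableEq ι] (F y x : ι → ℝ) {t : ℝ}
    (ht : t ≠ 0) :
    ∑ i, deriv (fun r => deriv (fun r' =>
        uniformForcePropagator F y (Function.update x i r') t) r) (x i) +
      Complex.I * deriv (fun τ => uniformForcePropagator F y x τ) t +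
      (∑ i, F i * x i : ℝ) * uniformForcePropagator F y x t = 0 := by
  have action_time : HasDerivAt (fun τ => ∑ i, uniformForceAction (F i) (y i) (x i) τ)
      (∑ i, (F i * x i - uniformForceMomentum (F i) (y i) (x i) t ^ 2)) t :=
    .fun_sum fun i _ => hasDerivAt_uniformForceAction_time (F i) (y i) (x i) ht
  refine schrodinger_of_hamiltonJacobi_of_transport
    (S := fun x t => ∑ i, uniformForceAction (F i) (y i) (x i) t)
    (fun i => .of_forall (hasDerivAt_sum_uniformForceAction_update F y x t i))
    (fun i => hasDerivAt_uniformForceMomentum (F i) (y i) (x i) t)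
    action_time (hasDerivAt_freeAmplitude (Fintype.card ι) ht) ?hamiltonJacobi ?transport
  case hamiltonJacobi => simp only [← Finset.sum_add_distrib, sub_add_cancel]
  case transport =>
    rw [Finset.sum_const, Finset.card_univ, nsmul_eq_mul]
    push_cast
    ring

end UniformForce

/-- The explicit propagator `Φ̃(x₁,x₂,t) = (1/(4πt)) · exp(i(|x−y|²/(4t) +
((x₂+y₂)/2)t − t³/12))` solves the time-dependent Schrödinger equation in a
linear potential: `ΔΦ̃ + i ∂Φ̃/∂t + x₂·Φ̃ = 0` for all `t > 0` and all
`(x₁,x₂) ∈ ℝ²` (key step in Lemma 1 of the paper, two-dimensional case). -/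
theorem propagator_solves_schrodinger
    (y₁ y₂ : ℝ) (Φ : ℝ → ℝ → ℝ → ℂ)
    (hΦ : ∀ x₁ x₂ t : ℝ, Φ x₁ x₂ t =
      ((1 / (4 * Real.pi * t) : ℝ) : ℂ) *
        Complex.exp (Complex.I *
          ((((x₁ - y₁) ^ 2 + (x₂ - y₂) ^ 2) / (4 * t)
            + ((x₂ + y₂) / 2) * t - t ^ 3 / 12 : ℝ) : ℂ))) :
    ∀ t : ℝ, 0 < t → ∀ x₁ x₂ : ℝ,
      deriv (fun s : ℝ => deriv (fun s' : ℝ => Φ s' x₂ t) s) x₁ +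
      deriv (fun s : ℝ => deriv (fun s' : ℝ => Φ x₁ s' t) s) x₂ +
      Complex.I * deriv (fun s : ℝ => Φ x₁ x₂ s) t +
      (x₂ : ℂ) * Φ x₁ x₂ t = 0 := by
  intro t ht x₁ x₂
  simp only [hΦ, ← uniformForcePropagator_fin_two]
  simpa [Fin.sum_univ_two, update_vec_two_zero, update_vec_two_one] using
    propagator_solves_schrodinger_general ![0, 1] ![y₁, y₂] ![x₁, x₂] ht.ne'
end
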